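/- arXiv:0705.3424 — 3 statements merged into one kernel-verified Lean document; each statement's English description precedes it below -/
import Mathlib

section
/- For all b > 0 and δ > 0 there exist c > 0, ε > 0, and N ∈ ℕ such that for all n ≥ N the following holds: if E is a subset of the closed unit ball of ℓ^n_∞(ℂ) (complex-valued functions on {1,…,n} with the supremum norm) which is δ-separated (‖v − w‖_∞ ≥ δ for all distinct v, w ∈ E) and |E| ≥ e^{bn}, then there are t ∈ [−1,1] and a set J ⊆ {1,…,n} with |J| ≥ cn such that either (i) for every σ ∈ {0,1}^J there is a v ∈ E such that for all j ∈ J one has re(v(j)) ≥ t + ε if σ(j) = 1 and re(v(j)) ≤ t − ε if σ(j) = 0, or (ii) the same statement holds with re(v(j)) replaced by im(v(j)). -/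
/-!
Choosing a finite net `T` of levels turns a separated family of bounded functions on `Z` into a
separated family of partial `{0,1}`-valued functions on `Z × T`: record whether a value is clearly
above or clearly below a level. For these, a Sauer–Shelah type theorem holds. By a Chernoff bound, a
separated family with more than `exp (a |Z|)` members splits at some point into two parts of
proportion at least `a² / 4`, for otherwise each member is determined by the set of points where it
takes the rare value, and these sets are small on average. Since the family shatters at least as
many sets as its two parts together, recursive splitting produces exponentially many shattered sets,
and by the Chernoff bound again they cannot all be small. Finally, the pigeonhole principle selects
one level and one of the real and imaginary parts.
-/

open Finset

universe u v

variable {V Z : Type*}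

/-- For a family `f` of partial `{0,1}`-valued functions on `Z` indexed by `V`, with `none` encoding
an undefined value: the members of `S` realise every `{0,1}`-pattern on `A`. Patterns are given by
functions on all of `Z`, of which only the restriction to `A` matters. -/
def PartialShatters (f : V → Z → Option Bool) (S : Finset V) (A : Finset Z) : Prop :=
  ∀ σ : Z → Bool, ∃ v ∈ S, ∀ z ∈ A, f v z = some (σ z)

/-- Any two distinct members of a family of partial `{0,1}`-valued functions take opposite values at
some point where both are defined. It plays the role of distinctness in the Sauer–Shelah lemma. -/
def PartialSeparated (f : V → Z → Option Bool) (S : Finset V) : Prop :=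
  ∀ v ∈ S, ∀ w ∈ S, v ≠ w → ∃ z b, f v z = some b ∧ f w z = some (!b)

open Classical in
/-- The collection of all sets shattered by a family of partial `{0,1}`-valued functions, the
analogue of `Finset.shatterer`. -/
noncomputable def partialShatterer [Fintype Z] (f : V → Z → Option Bool) (S : Finset V) :
    Finset (Finset Z) :=
  {A | PartialShatters f S A}

/-- The family `g` of real-valued functions, restricted to `S`, shatters `A` around the level `t`
with margin `ε`, as in the definition of the fat-shattering dimension but with the same level at all
points. -/
def FatShatters (g : V → Z → ℝ) (S : Finset V) (t ε : ℝ) (A : Finset Z) : Prop :=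
  ∀ σ : Z → Bool, ∃ v ∈ S, ∀ z ∈ A,
    (σ z = true → t + ε ≤ g v z) ∧ (σ z = false → g v z ≤ t - ε)

/-- The partial `{0,1}`-valued function recording on which side of the level `t` a real number lies,
undefined for numbers at distance less than `ε` from `t`. -/
noncomputable def threshold (t ε x : ℝ) : Option Bool :=
  if t + ε ≤ x then some true else if x ≤ t - ε then some false else none

lemma norm_le_abs_re_add_abs_im {𝕜 : Type*} [RCLike 𝕜] (z : 𝕜) :
    ‖z‖ ≤ |RCLike.re z| + |RCLike.im z| := by
  refine le_of_sq_le_sq ?_ (by positivity)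
  rw [RCLike.norm_sq_eq_def, ← abs_mul_abs_self (RCLike.re z),
    ← abs_mul_abs_self (RCLike.im z)]
  linarith [mul_nonneg (abs_nonneg (RCLike.re z)) (abs_nonneg (RCLike.im z))]

-- Jensen's inequality for `exp`, from its tangent line at `x`.
lemma exp_mul_card_le_sum_exp {α : Type*} {s : Finset α} {u : α → ℝ} {x : ℝ}
    (h : x * #s ≤ ∑ i ∈ s, u i) : Real.exp x * #s ≤ ∑ i ∈ s, Real.exp (u i) := by
  have tangent (i : α) : Real.exp x * (u i - x + 1) ≤ Real.exp (u i) := by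
    calc Real.exp x * (u i - x + 1) ≤ Real.exp x * Real.exp (u i - x) := by
          gcongr
          exact Real.add_one_le_exp _
      _ = Real.exp (u i) := by rw [← Real.exp_add, add_sub_cancel]
  calc Real.exp x * #s ≤ Real.exp x * ∑ i ∈ s, (u i - x + 1) := by
        gcongr
        rw [sum_add_distrib, sum_sub_distrib, sum_const, sum_const, nsmul_eq_mul, nsmul_eq_mul]
        linarith
    _ ≤ ∑ i ∈ s, Real.exp (u i) := by
        rw [mul_sum]
        exact sum_le_sum fun i _ => tangent i

section Counting

variable [Fintype Z]

lemma sum_pow_card_le_exp {x : ℝ} (hx : 0 ≤ x) (F : Finset (Finset Z)) :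
    ∑ A ∈ F, x ^ #A ≤ Real.exp (x * Fintype.card Z) := by
  calc ∑ A ∈ F, x ^ #A ≤ ∑ A : Finset Z, x ^ #A :=
        sum_le_univ_sum_of_nonneg fun A => by positivity
    _ = (x + 1) ^ Fintype.card Z := by
        simpa only [one_pow, mul_one] using Fintype.sum_pow_mul_eq_add_pow Z x 1
    _ ≤ Real.exp x ^ Fintype.card Z := by
        gcongr
        exact Real.add_one_le_exp x
    _ = Real.exp (x * Fintype.card Z) := by rw [← Real.exp_nat_mul, mul_comm]

-- A Chernoff bound: compare both sides with `∑ A ∈ F, x ^ #A` for `x = exp (-2 / a)`.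
lemma card_le_exp_of_sum_card_le {a : ℝ} (ha : 0 < a) {F : Finset (Finset Z)}
    (hF : ∑ A ∈ F, (#A : ℝ) ≤ a ^ 2 / 4 * Fintype.card Z * #F) :
    (#F : ℝ) ≤ Real.exp (a * Fintype.card Z) := by
  set m : ℝ := (Fintype.card Z : ℝ)
  have exp_le : Real.exp (-(2 / a)) ≤ a / 2 := by
    rw [Real.exp_neg, ← inv_div 2 a]
    exact inv_anti₀ (by positivity) (by linarith [Real.add_one_le_exp (2 / a)])
  have sum_ge : -(a / 2 * m) * #F ≤ ∑ A ∈ F, (#A : ℝ) * -(2 / a) := by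
    calc -(a / 2 * m) * #F = -(2 / a * (a ^ 2 / 4 * m * #F)) := by
          field_simp
          ring
      _ ≤ -(2 / a * ∑ A ∈ F, (#A : ℝ)) := by gcongr
      _ = ∑ A ∈ F, (#A : ℝ) * -(2 / a) := by rw [← sum_mul]; ring
  calc (#F : ℝ) = Real.exp (a / 2 * m) * (Real.exp (-(a / 2 * m)) * #F) := by
        rw [← mul_assoc, ← Real.exp_add, add_neg_cancel, Real.exp_zero, one_mul]
    _ ≤ Real.exp (a / 2 * m) * ∑ A ∈ F, Real.exp (-(2 / a)) ^ #A := by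
        gcongr
        simpa only [Real.exp_nat_mul] using exp_mul_card_le_sum_exp sum_ge
    _ ≤ Real.exp (a / 2 * m) * Real.exp (a / 2 * m) := by
        gcongr
        exact (sum_pow_card_le_exp (Real.exp_pos _).le F).trans (by gcongr)
    _ = Real.exp (a * m) := by rw [← Real.exp_add, ← add_mul, add_halves]

lemma card_le_exp_of_forall_card_le {a : ℝ} (ha : 0 < a) {F : Finset (Finset Z)}
    (hF : ∀ A ∈ F, (#A : ℝ) ≤ a ^ 2 / 4 * Fintype.card Z) :
    (#F : ℝ) ≤ Real.exp (a * Fintype.card Z) := by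
  refine card_le_exp_of_sum_card_le ha ((sum_le_sum hF).trans_eq ?_)
  rw [sum_const, nsmul_eq_mul, mul_comm]

lemma exists_le_card_slice {K : Type*} [Fintype K] [Nonempty K] {c : ℝ} {J : Finset (Z × K)}
    (hJ : c * Fintype.card (Z × K) ≤ #J) :
    ∃ (k : K) (A : Finset Z), c * Fintype.card Z ≤ #A ∧ ∀ z ∈ A, (z, k) ∈ J := by
  classical
  obtain ⟨k, -, hk⟩ := exists_le_card_fiber_of_nsmul_le_card_of_maps_to
    (s := J) (t := univ) (f := Prod.snd) (b := c * Fintype.card Z)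
    (fun _ _ => mem_univ _) univ_nonempty (by
      rw [card_univ, nsmul_eq_mul]
      rw [Fintype.card_prod, Nat.cast_mul] at hJ
      linarith)
  refine ⟨k, {z ∈ J | z.2 = k}.image Prod.fst, ?_, ?_⟩
  · rwa [card_image_of_injOn]
    intro z hz w hw hzw
    exact Prod.ext hzw ((mem_filter.1 hz).2.trans (mem_filter.1 hw).2.symm)
  · simp

end Counting

section PartialFunctions

variable {f : V → Z → Option Bool} {S T : Finset V} {A : Finset Z}

lemma PartialSeparated.mono (hS : PartialSeparated f S) (hTS : T ⊆ S) : PartialSeparated f T :=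
  fun v hv w hw => hS v (hTS hv) w (hTS hw)

lemma PartialShatters.mono (hT : PartialShatters f T A) (hTS : T ⊆ S) : PartialShatters f S A :=
  fun σ => (hT σ).imp fun _ h => ⟨hTS h.1, h.2⟩

lemma PartialShatters.notMem {z : Z} {b : Bool}
    (h : PartialShatters f {v ∈ S | f v z = some b} A) : z ∉ A := by
  intro hz
  obtain ⟨v, hv, hA⟩ := h fun _ => !b
  have : some b = some (!b) := (mem_filter.1 hv).2.symm.trans (hA z hz)
  simp at this

lemma PartialShatters.insert [DecidableEq Z] {z : Z}
    (h : ∀ b, PartialShatters f {v ∈ S | f v z = some b} A) :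
    PartialShatters f S (insert z A) := by
  intro σ
  obtain ⟨v, hv, hA⟩ := h (σ z) σ
  obtain ⟨hvS, hvz⟩ := mem_filter.1 hv
  exact ⟨v, hvS, (forall_mem_insert _ _ _).2 ⟨hvz, hA⟩⟩

variable [Fintype Z]

@[simp]
lemma mem_partialShatterer : A ∈ partialShatterer f S ↔ PartialShatters f S A := by
  simp [partialShatterer]

lemma partialShatterer_nonempty (hS : S.Nonempty) : (partialShatterer f S).Nonempty := by
  obtain ⟨v, hv⟩ := hS
  exact ⟨∅, mem_partialShatterer.2 fun σ => ⟨v, hv, by simp⟩⟩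

lemma card_partialShatterer_add_le (f : V → Z → Option Bool) (S : Finset V) (z : Z) :
    #(partialShatterer f {v ∈ S | f v z = some true})
      + #(partialShatterer f {v ∈ S | f v z = some false}) ≤ #(partialShatterer f S) := by
  classical
  set P := partialShatterer f {v ∈ S | f v z = some true}
  set Q := partialShatterer f {v ∈ S | f v z = some false}
  have notMem_of_mem_union : ∀ A ∈ P ∪ Q, z ∉ A := fun A hA =>
    (mem_union.1 hA).elim (fun h => (mem_partialShatterer.1 h).notMem)
      (fun h => (mem_partialShatterer.1 h).notMem)
  have card_image : #((P ∩ Q).image (insert z)) = #(P ∩ Q) := by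
    refine card_image_of_injOn fun A hA B hB hAB => ?_
    rw [← erase_insert (notMem_of_mem_union A (inter_subset_union hA)),
      ← erase_insert (notMem_of_mem_union B (inter_subset_union hB))]
    exact congrArg (fun C => C.erase z) hAB
  have disjoint : Disjoint (P ∪ Q) ((P ∩ Q).image (insert z)) := by
    refine disjoint_left.2 fun A hA hA' => ?_
    obtain ⟨B, -, rfl⟩ := mem_image.1 hA'
    exact notMem_of_mem_union _ hA (mem_insert_self _ _)
  have union_subset : P ∪ Q ⊆ partialShatterer f S := by
    refine Finset.union_subset ?_ ?_ <;> intro A hA <;>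
      exact mem_partialShatterer.2 ((mem_partialShatterer.1 hA).mono (filter_subset _ _))
  have image_subset : (P ∩ Q).image (insert z) ⊆ partialShatterer f S := by
    refine image_subset_iff.2 fun A hA => mem_partialShatterer.2 (PartialShatters.insert ?_)
    obtain ⟨hP, hQ⟩ := mem_inter.1 hA
    exact Bool.rec (mem_partialShatterer.1 hQ) (mem_partialShatterer.1 hP)
  calc #P + #Q = #(P ∪ Q ∪ (P ∩ Q).image (insert z)) := by
        rw [card_union_of_disjoint disjoint, card_image, card_union_add_card_inter]
    _ ≤ #(partialShatterer f S) := card_le_card (Finset.union_subset union_subset image_subset)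

lemma exists_two_mul_card_partialShatterer_filter_le (f : V → Z → Option Bool) (S : Finset V)
    (z : Z) :
    ∃ b, 2 * #(partialShatterer f {v ∈ S | f v z = some b}) ≤ #(partialShatterer f S) := by
  by_contra! h
  linarith [h true, h false, card_partialShatterer_add_le f S z]

lemma PartialSeparated.card_le_exp_of_forall_card_filter_le (hS : PartialSeparated f S) {a : ℝ}
    (ha : 0 < a) (r : Z → Bool)
    (hr : ∀ z, (#{v ∈ S | f v z = some (r z)} : ℝ) ≤ a ^ 2 / 4 * #S) :
    (#S : ℝ) ≤ Real.exp (a * Fintype.card Z) := by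
  classical
  set R : V → Finset Z := fun v => {z | f v z = some (r z)} with hR
  have injOn : Set.InjOn R S := by
    intro v hv w hw hvw
    by_contra hne
    obtain ⟨z, b, hvz, hwz⟩ := hS v hv w hw hne
    have : b = r z ↔ (!b) = r z := by simpa [hR, hvz, hwz] using Finset.ext_iff.1 hvw z
    cases b <;> simp_all
  rw [← card_image_of_injOn injOn]
  refine card_le_exp_of_sum_card_le ha ?_
  rw [sum_image injOn, card_image_of_injOn injOn]
  calc ∑ v ∈ S, (#(R v) : ℝ) = ∑ z, (#{v ∈ S | f v z = some (r z)} : ℝ) := by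
        exact_mod_cast sum_card_bipartiteAbove_eq_sum_card_bipartiteBelow
          fun v z => f v z = some (r z)
    _ ≤ ∑ _z : Z, a ^ 2 / 4 * (#S : ℝ) := sum_le_sum fun z _ => hr z
    _ = a ^ 2 / 4 * Fintype.card Z * #S := by
        rw [sum_const, card_univ, nsmul_eq_mul]
        ring

lemma PartialSeparated.exists_forall_lt_card_filter (hS : PartialSeparated f S) {a : ℝ}
    (ha : 0 < a) (hcard : Real.exp (a * Fintype.card Z) < #S) :
    ∃ z, ∀ b, a ^ 2 / 4 * #S < (#{v ∈ S | f v z = some b} : ℝ) := by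
  by_contra! h
  choose r hr using h
  exact hcard.not_ge (hS.card_le_exp_of_forall_card_filter_le ha r hr)

lemma PartialSeparated.card_le_exp_mul_card_partialShatterer_pow (hS : PartialSeparated f S)
    {a : ℝ} (ha : 0 < a) {p : ℕ} (hp : 1 ≤ 2 ^ p * (a ^ 2 / 4)) :
    (#S : ℝ) ≤ Real.exp (a * Fintype.card Z) * #(partialShatterer f S) ^ p := by
  induction S using Finset.strongInduction with
  | H S ih =>
    rcases S.eq_empty_or_nonempty with rfl | hne
    · rw [card_empty, Nat.cast_zero]
      positivity
    rcases le_or_gt (#S : ℝ) (Real.exp (a * Fintype.card Z)) with hle | hlt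
    · have : (1 : ℝ) ≤ #(partialShatterer f S) :=
        Nat.one_le_cast.2 (card_pos.2 (partialShatterer_nonempty hne))
      exact hle.trans (le_mul_of_one_le_right (Real.exp_pos _).le (one_le_pow₀ this))
    obtain ⟨z, hz⟩ := hS.exists_forall_lt_card_filter ha hlt
    have nonempty (b : Bool) : {v ∈ S | f v z = some b}.Nonempty :=
      card_pos.1 (Nat.cast_pos.1 ((by positivity : 0 ≤ a ^ 2 / 4 * (#S : ℝ)).trans_lt (hz b)))
    have ssubset (b : Bool) : {v ∈ S | f v z = some b} ⊂ S := by
      obtain ⟨w, hw⟩ := nonempty !b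
      obtain ⟨hwS, hwz⟩ := mem_filter.1 hw
      exact filter_ssubset.2 ⟨w, hwS, by simp [hwz]⟩
    have card_part (b : Bool) : a ^ 2 / 4 * #S ≤ Real.exp (a * Fintype.card Z) *
        #(partialShatterer f {v ∈ S | f v z = some b}) ^ p :=
      (hz b).le.trans (ih _ (ssubset b) (hS.mono (filter_subset _ _)))
    obtain ⟨b, hb⟩ := exists_two_mul_card_partialShatterer_filter_le f S z
    calc (#S : ℝ) ≤ 2 ^ p * (a ^ 2 / 4) * #S := le_mul_of_one_le_left (by positivity) hp
      _ = 2 ^ p * (a ^ 2 / 4 * #S) := by ring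
      _ ≤ 2 ^ p * (Real.exp (a * Fintype.card Z) *
          #(partialShatterer f {v ∈ S | f v z = some b}) ^ p) := by
          exact mul_le_mul_of_nonneg_left (card_part b) (by positivity)
      _ = Real.exp (a * Fintype.card Z) *
          (2 * #(partialShatterer f {v ∈ S | f v z = some b}) : ℕ) ^ p := by
          push_cast
          ring
      _ ≤ Real.exp (a * Fintype.card Z) * #(partialShatterer f S) ^ p := by gcongr

end PartialFunctions

theorem exists_partialShatters_of_exp_le_card {b : ℝ} (hb : 0 < b) :
    ∃ κ : ℝ, 0 < κ ∧ ∀ (V : Type u) (Z : Type v) [Fintype Z] (f : V → Z → Option Bool)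
      (S : Finset V), PartialSeparated f S → Real.exp (b * Fintype.card Z) ≤ #S →
      ∃ A : Finset Z, κ * Fintype.card Z ≤ #A ∧ PartialShatters f S A := by
  obtain ⟨p, hp⟩ : ∃ p : ℕ, 1 ≤ 2 ^ p * ((b / 2) ^ 2 / 4) := by
    obtain ⟨p, hp⟩ := pow_unbounded_of_one_lt ((b / 2) ^ 2 / 4)⁻¹ one_lt_two
    exact ⟨p, ((inv_lt_iff_one_lt_mul₀ (by positivity)).1 hp).le⟩
  set a : ℝ := b / (2 * (p + 1)) with ha
  have hpa : p * a < b / 2 := by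
    rw [ha]
    field_simp
    linarith
  refine ⟨a ^ 2 / 4, by positivity, fun V Z _ f S hS hcard => ?_⟩
  set m : ℝ := (Fintype.card Z : ℝ)
  by_contra! hsmall
  have lt_of_mem : ∀ A ∈ partialShatterer f S, (#A : ℝ) < a ^ 2 / 4 * m := fun A hA =>
    not_le.1 fun h => hsmall A h (mem_partialShatterer.1 hA)
  have hm : 0 < m := by
    have hne : S.Nonempty := card_pos.1 (Nat.cast_pos.1 ((Real.exp_pos _).trans_le hcard))
    obtain ⟨A, hA⟩ := partialShatterer_nonempty (f := f) hne
    exact pos_of_mul_pos_right ((Nat.cast_nonneg _).trans_lt (lt_of_mem A hA)) (by positivity)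
  have card_le : (#(partialShatterer f S) : ℝ) ≤ Real.exp (a * m) :=
    card_le_exp_of_forall_card_le (by positivity) fun A hA => (lt_of_mem A hA).le
  exact lt_irrefl (Real.exp (b * m)) <|
    calc Real.exp (b * m) ≤ #S := hcard
      _ ≤ Real.exp (b / 2 * m) * #(partialShatterer f S) ^ p :=
        hS.card_le_exp_mul_card_partialShatterer_pow (half_pos hb) hp
      _ ≤ Real.exp (b / 2 * m) * Real.exp (a * m) ^ p := by gcongr
      _ = Real.exp ((b / 2 + p * a) * m) := by
        rw [← Real.exp_nat_mul, ← Real.exp_add]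
        ring_nf
      _ < Real.exp (b * m) := by
        gcongr
        linarith

section RealFunctions

lemma threshold_eq_true {t ε x : ℝ} : threshold t ε x = some true ↔ t + ε ≤ x := by
  unfold threshold
  split_ifs <;> simp_all

lemma threshold_eq_false {t ε x : ℝ} (hε : 0 < ε) :
    threshold t ε x = some false ↔ x ≤ t - ε := by
  unfold threshold
  split_ifs with h
  · simp only [Option.some.injEq, Bool.true_eq_false, false_iff, not_le]
    linarith
  all_goals simp_all

-- A point of a net of mesh `δ / 2 - ε` close to the midpoint of `x` and `y` separates them.
lemma exists_finset_levels {p q δ ε : ℝ} (hpq : p ≤ q) (hεδ : 2 * ε < δ) :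
    ∃ T : Finset ℝ, T.Nonempty ∧ ↑T ⊆ Set.Icc p q ∧ ∀ x ∈ Set.Icc p q, ∀ y ∈ Set.Icc p q,
      δ ≤ x - y → ∃ t ∈ T, y ≤ t - ε ∧ t + ε ≤ x := by
  obtain ⟨T, hT, hfin, hcover⟩ :=
    (isCompact_Icc (a := p) (b := q)).finite_cover_balls (e := δ / 2 - ε) (by linarith)
  have exists_near : ∀ x ∈ Set.Icc p q, ∃ t ∈ T, |x - t| < δ / 2 - ε := fun x hx => by
    simpa only [Set.mem_iUnion₂, Metric.mem_ball, Real.dist_eq, exists_prop] using hcover hx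
  obtain ⟨t₀, ht₀, -⟩ := exists_near p (Set.left_mem_Icc.2 hpq)
  refine ⟨hfin.toFinset, ⟨t₀, hfin.mem_toFinset.2 ht₀⟩, by rwa [hfin.coe_toFinset],
    fun x hx y hy hxy => ?_⟩
  obtain ⟨t, ht, hdist⟩ := exists_near ((x + y) / 2)
    ⟨by linarith [hx.1, hy.1], by linarith [hx.2, hy.2]⟩
  obtain ⟨hlow, hhigh⟩ := abs_lt.1 hdist
  exact ⟨t, hfin.mem_toFinset.2 ht, by linarith, by linarith⟩

lemma fatShatters_of_partialShatters_threshold {g : V → Z → ℝ} {S : Finset V} {ε t : ℝ}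
    {A : Finset Z} (hε : 0 < ε) (h : PartialShatters (fun v z => threshold t ε (g v z)) S A) :
    FatShatters g S t ε A := by
  intro σ
  obtain ⟨v, hv, hvA⟩ := h σ
  exact ⟨v, hv, fun z hz => ⟨fun hσ => threshold_eq_true.1 (hσ ▸ hvA z hz),
    fun hσ => (threshold_eq_false hε).1 (hσ ▸ hvA z hz)⟩⟩

theorem exists_fatShatters_of_exp_le_card {b δ ε p q : ℝ} (hb : 0 < b) (hε : 0 < ε)
    (hεδ : 2 * ε < δ) (hpq : p ≤ q) :
    ∃ c : ℝ, 0 < c ∧ ∀ (V : Type u) (Z : Type v) [Fintype Z] (g : V → Z → ℝ) (S : Finset V),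
      (∀ v ∈ S, ∀ z, g v z ∈ Set.Icc p q) →
      (∀ v ∈ S, ∀ w ∈ S, v ≠ w → ∃ z, δ ≤ |g v z - g w z|) →
      Real.exp (b * Fintype.card Z) ≤ #S →
      ∃ t ∈ Set.Icc p q, ∃ A : Finset Z, c * Fintype.card Z ≤ #A ∧ FatShatters g S t ε A := by
  obtain ⟨T, hTne, hT, exists_between⟩ := exists_finset_levels hpq hεδ
  have hT0 : (0 : ℝ) < #T := Nat.cast_pos.2 hTne.card_pos
  have : Nonempty T := hTne.to_subtype
  obtain ⟨c, hc, hshatter⟩ := exists_partialShatters_of_exp_le_card (div_pos hb hT0)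
  refine ⟨c, hc, fun V Z _ g S hbound hsep hcard => ?_⟩
  let f : V → Z × T → Option Bool := fun v z => threshold z.2 ε (g v z.1)
  have separated : PartialSeparated f S := by
    intro v hv w hw hvw
    obtain ⟨z, hz⟩ := hsep v hv w hw hvw
    rcases le_abs'.1 hz with h | h
    · obtain ⟨t, ht, hvt, hwt⟩ := exists_between _ (hbound w hw z) _ (hbound v hv z) (by linarith)
      exact ⟨(z, ⟨t, ht⟩), false, (threshold_eq_false hε).2 hvt, threshold_eq_true.2 hwt⟩
    · obtain ⟨t, ht, hwt, hvt⟩ := exists_between _ (hbound v hv z) _ (hbound w hw z) h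
      exact ⟨(z, ⟨t, ht⟩), true, threshold_eq_true.2 hvt, (threshold_eq_false hε).2 hwt⟩
  have card_eq : b / #T * Fintype.card (Z × T) = b * Fintype.card Z := by
    rw [Fintype.card_prod, Fintype.card_coe, Nat.cast_mul]
    field_simp
  obtain ⟨J, hJcard, hJ⟩ := hshatter V (Z × T) f S separated (by rwa [card_eq])
  obtain ⟨t, A, hAcard, hA⟩ := exists_le_card_slice hJcard
  refine ⟨t, hT t.2, A, hAcard, fatShatters_of_partialShatters_threshold hε fun σ => ?_⟩
  exact (hJ fun z => σ z.1).imp fun v hv => ⟨hv.1, fun z hz => hv.2 (z, t) (hA z hz)⟩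

end RealFunctions

theorem stmt15_general (𝕜 : Type u) [RCLike 𝕜] {b δ : ℝ} (hb : 0 < b) (hδ : 0 < δ) :
    ∃ c ε : ℝ, 0 < c ∧ 0 < ε ∧ ∀ (ι : Type v) [Fintype ι] (E : Finset (ι → 𝕜)),
      (∀ v ∈ E, ∀ j, ‖v j‖ ≤ 1) →
      (∀ v ∈ E, ∀ w ∈ E, v ≠ w → ∃ j, δ ≤ ‖v j - w j‖) →
      Real.exp (b * Fintype.card ι) ≤ #E →
      ∃ t ∈ Set.Icc (-1 : ℝ) 1, ∃ J : Finset ι, c * Fintype.card ι ≤ #J ∧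
        (FatShatters (fun v j => RCLike.re (v j)) E t ε J ∨
          FatShatters (fun v j => RCLike.im (v j)) E t ε J) := by
  obtain ⟨c, hc, hshatter⟩ := exists_fatShatters_of_exp_le_card (b := b / 2) (δ := δ / 2)
    (ε := δ / 8) (p := -1) (q := 1) (by positivity) (by positivity) (by linarith) (by norm_num)
  refine ⟨c, δ / 8, hc, by positivity, fun ι _ E hball hsep hcard => ?_⟩
  let g : (ι → 𝕜) → ι × Bool → ℝ := fun v z =>
    bif z.2 then RCLike.re (v z.1) else RCLike.im (v z.1)
  have g_mem : ∀ v ∈ E, ∀ z, g v z ∈ Set.Icc (-1 : ℝ) 1 := by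
    rintro v hv ⟨j, _ | _⟩
    · exact abs_le.1 ((RCLike.abs_im_le_norm _).trans (hball v hv j))
    · exact abs_le.1 ((RCLike.abs_re_le_norm _).trans (hball v hv j))
  have g_separated : ∀ v ∈ E, ∀ w ∈ E, v ≠ w → ∃ z, δ / 2 ≤ |g v z - g w z| := by
    intro v hv w hw hvw
    obtain ⟨j, hj⟩ := hsep v hv w hw hvw
    by_contra! h
    have hre : |RCLike.re (v j - w j)| < δ / 2 := by simpa [g] using h (j, true)
    have him : |RCLike.im (v j - w j)| < δ / 2 := by simpa [g] using h (j, false)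
    linarith [norm_le_abs_re_add_abs_im (v j - w j)]
  have card_eq : b / 2 * Fintype.card (ι × Bool) = b * Fintype.card ι := by
    rw [Fintype.card_prod, Fintype.card_bool, Nat.cast_mul, Nat.cast_ofNat]
    ring
  obtain ⟨t, ht, A, hAcard, hA⟩ :=
    hshatter (ι → 𝕜) (ι × Bool) g E g_mem g_separated (by rwa [card_eq])
  obtain ⟨β, J, hJcard, hJ⟩ := exists_le_card_slice hAcard
  have fatShatters_slice : FatShatters (fun v j => g v (j, β)) E t (δ / 8) J := fun σ =>
    (hA fun z => σ z.1).imp fun v hv => ⟨hv.1, fun j hj => hv.2 (j, β) (hJ j hj)⟩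
  refine ⟨t, ht, J, hJcard, ?_⟩
  cases β
  · exact Or.inr fatShatters_slice
  · exact Or.inl fatShatters_slice

/-- Lemma (Glasner–Weiss, complex version): δ-separated subsets of the unit ball of
`ℓ^n_∞(ℂ)` of exponential cardinality admit a coordinate set of proportional size on
which either the real or the imaginary parts shatter around some level `t`. -/
theorem stmt15 :
    ∀ b δ : ℝ, 0 < b → 0 < δ →
      ∃ (c ε : ℝ) (N : ℕ), 0 < c ∧ 0 < ε ∧
        ∀ n : ℕ, N ≤ n →
          ∀ E : Finset (Fin n → ℂ),
            (∀ v ∈ E, ∀ j, ‖v j‖ ≤ 1) →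
            (∀ v ∈ E, ∀ w ∈ E, v ≠ w → ∃ j, δ ≤ ‖v j - w j‖) →
            Real.exp (b * n) ≤ (E.card : ℝ) →
            ∃ (t : ℝ) (J : Finset (Fin n)), t ∈ Set.Icc (-1 : ℝ) 1 ∧
              c * n ≤ (J.card : ℝ) ∧
              ((∀ σ : Fin n → Bool, ∃ v ∈ E, ∀ j ∈ J,
                  (σ j = true → t + ε ≤ (v j).re) ∧ (σ j = false → (v j).re ≤ t - ε)) ∨
                (∀ σ : Fin n → Bool, ∃ v ∈ E, ∀ j ∈ J,
                  (σ j = true → t + ε ≤ (v j).im) ∧ (σ j = false → (v j).im ≤ t - ε))) := by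
  intro b δ hb hδ
  obtain ⟨c, ε, hc, hε, h⟩ := stmt15_general ℂ hb hδ
  exact ⟨c, ε, 0, hc, hε, fun n _ E hball hsep hcard =>
    let ⟨t, ht, J, hJ⟩ := h (Fin n) E hball hsep (by rwa [Fintype.card_fin])
    ⟨t, J, ht, by simpa only [Fintype.card_fin] using hJ.1, hJ.2⟩⟩
end

section
/- For every δ > 0 there exist c > 0, ε > 0, and N ∈ ℕ such that for every compact Hausdorff space Y and every finite subset Θ of the closed unit ball of C(Y) with |Θ| ≥ N, if ‖∑_{f∈Θ} c_f f‖ ≥ δ ∑_{f∈Θ} |c_f| for all scalars (c_f)_{f∈Θ} in ℂ (i.e., the linear map γ : ℓ_1^Θ → C(Y) sending the standard basis of ℓ_1^Θ to Θ is an isomorphism onto its image with ‖γ⁻¹‖⁻¹ ≥ δ), then there exist closed disks B_1, B_2 ⊆ ℂ of diameter at most ε/6 with dist(B_1, B_2) ≥ ε and a subset I ⊆ Θ with |I| ≥ c|Θ| such that the collection {(f⁻¹(B_1), f⁻¹(B_2)) : f ∈ I} is independent. -/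
/-!
Each sign pattern `s` has a point `y s` at which the signed sum `∑ s f • f` is at least `δ |Θ|`;
round the values `f (y s)` to labels from a finite net of the unit ball. A set `A` of sign patterns
on which every coordinate is essentially constant can carry such signed sums only if it is
exponentially small compared with the cube, because signed sums of *fixed* vectors are subgaussian.
Hence every larger `A` has a coordinate taking two distant labels, each on a fixed proportion of
`A`. A Sauer–Shelah type induction along these splittings yields exponentially many shattered
partial assignments of pairs of labels to coordinates, and exponentially many partial assignments
cannot all have small support. Some pair of labels is therefore assigned to a fixed proportion of
the coordinates, and the balls around its two labels are the required ones.
-/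

open Metric

/-- The collection of pairs `(C i, D i)` for `i` in the index set `S` is independent. -/
def IndepPairs {ι α : Type*} (C D : ι → Set α) (S : Set ι) : Prop :=
  ∀ T : Finset ι, (T : Set ι) ⊆ S → ∀ σ : ι → Bool,
    (⋂ i ∈ T, cond (σ i) (C i) (D i)).Nonempty

open scoped Finset

theorem IndepPairs.map {ι κ α : Type*} {C D : κ → Set α} (e : ι ↪ κ) {I : Finset ι}
    (h : IndepPairs (fun i => C (e i)) (fun i => D (e i)) I) : IndepPairs C D (I.map e) := by
  intro T hT σ
  obtain ⟨x, hx⟩ := h (T.preimage e e.injective.injOn)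
    (fun i hi => by simpa using hT (Finset.mem_preimage.1 hi)) (fun i => σ (e i))
  refine ⟨x, Set.mem_iInter₂.2 fun k hk => ?_⟩
  obtain ⟨i, -, rfl⟩ := Finset.mem_map.1 (hT hk)
  exact Set.mem_iInter₂.1 hx i (Finset.mem_preimage.2 hk)

section Shattering

variable {Ω ι L Q : Type*} {X : Ω → ι → L} {e : Q → Bool → L}

/-- The set `A` of points, with coordinates `X ω i`, shatters the partial assignment `h` of codes
of label pairs to coordinates: every choice of one label from each assigned pair is realised by a
point of `A`. The code `q : Q` stands for the pair of labels `e q true`, `e q false`. -/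
def Shatters (X : Ω → ι → L) (e : Q → Bool → L) (A : Finset Ω) (h : ι → Option Q) : Prop :=
  ∀ τ : ι → Bool, ∃ ω ∈ A, ∀ i, ∀ q ∈ h i, X ω i = e q (τ i)

theorem shatters_none {A : Finset Ω} (hA : A.Nonempty) :
    Shatters X e A fun _ => none := fun _ =>
  hA.imp fun _ hω => ⟨hω, by simp⟩

theorem Shatters.mono {A B : Finset Ω} (hAB : A ⊆ B) {h : ι → Option Q}
    (hA : Shatters X e A h) : Shatters X e B h := fun τ =>
  (hA τ).imp fun _ hω => ⟨hAB hω.1, hω.2⟩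

theorem Shatters.eq_none (he : ∀ q, e q true ≠ e q false) {A : Finset Ω} {i : ι} {a : L}
    (hA : ∀ ω ∈ A, X ω i = a) {h : ι → Option Q} (hs : Shatters X e A h) : h i = none := by
  refine Option.eq_none_iff_forall_not_mem.2 fun q hq => he q ?_
  obtain ⟨ω, hω, h₁⟩ := hs fun _ => true
  obtain ⟨ω', hω', h₂⟩ := hs fun _ => false
  rw [← h₁ i q hq, ← h₂ i q hq, hA ω hω, hA ω' hω']

theorem Shatters.update [DecidableEq ι] [DecidableEq L] {A : Finset Ω} {i : ι} {q : Q}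
    {h : ι → Option Q} (hs : ∀ b, Shatters X e {ω ∈ A | X ω i = e q b} h) :
    Shatters X e A (Function.update h i (some q)) := by
  intro τ
  obtain ⟨ω, hω, hX⟩ := hs (τ i) τ
  obtain ⟨hωA, hωi⟩ := Finset.mem_filter.1 hω
  refine ⟨ω, hωA, fun j p hp => ?_⟩
  rcases eq_or_ne j i with rfl | hj
  · obtain rfl : q = p := by simpa using hp
    exact hωi
  · exact hX j p (by simpa [hj] using hp)

variable [Fintype ι] [Fintype Q]

open Classical in
/-- The finite set of partial assignments shattered by `A`, whose cardinality is the quantity that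
the Sauer–Shelah induction bounds below. -/
noncomputable def shattered (X : Ω → ι → L) (e : Q → Bool → L) (A : Finset Ω) :
    Finset (ι → Option Q) :=
  {h | Shatters X e A h}

theorem mem_shattered {A : Finset Ω} {h : ι → Option Q} :
    h ∈ shattered X e A ↔ Shatters X e A h := by
  simp [shattered]

variable [DecidableEq L]

theorem card_shattered_add_le (he : ∀ q, e q true ≠ e q false) (A : Finset Ω) (i : ι) (q : Q) :
    #(shattered X e {ω ∈ A | X ω i = e q true}) + #(shattered X e {ω ∈ A | X ω i = e q false}) ≤
      #(shattered X e A) := by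
  classical
  let S : Bool → Finset (ι → Option Q) := fun b => shattered X e {ω ∈ A | X ω i = e q b}
  have none_of_mem : ∀ b, ∀ h ∈ S b, h i = none := fun b h hh =>
    (mem_shattered.1 hh).eq_none he fun ω hω => (Finset.mem_filter.1 hω).2
  have card_union : #(S true ∪ S false) ≤ #{h ∈ shattered X e A | h i = none} := by
    refine Finset.card_le_card (Finset.union_subset ?_ ?_) <;>
    exact fun h hh => Finset.mem_filter.2
      ⟨mem_shattered.2 ((mem_shattered.1 hh).mono (Finset.filter_subset _ _)), none_of_mem _ h hh⟩
  have card_inter : #(S true ∩ S false) ≤ #{h ∈ shattered X e A | ¬h i = none} := by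
    refine Finset.card_le_card_of_injOn (Function.update · i (some q)) (fun h hh => ?_) ?_
    · obtain ⟨ht, hf⟩ := Finset.mem_inter.1 hh
      refine Finset.mem_filter.2 ⟨mem_shattered.2 (Shatters.update fun b => ?_), by simp⟩
      cases b
      exacts [mem_shattered.1 hf, mem_shattered.1 ht]
    · intro h hh g hg hhg
      have hhi := none_of_mem _ h (Finset.mem_inter.1 hh).1
      have hgi := none_of_mem _ g (Finset.mem_inter.1 hg).1
      funext j
      rcases eq_or_ne j i with rfl | hj
      · rw [hhi, hgi]
      · simpa [hj] using congrFun hhg j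
  calc #(S true) + #(S false) = #(S true ∪ S false) + #(S true ∩ S false) :=
        (Finset.card_union_add_card_inter _ _).symm
    _ ≤ _ := add_le_add card_union card_inter
    _ = #(shattered X e A) := Finset.card_filter_add_card_filter_not _

theorem rpow_le_card_shattered (he : ∀ q, e q true ≠ e q false) {K ρ θ : ℝ} (hK : 0 < K)
    (hρ : 0 < ρ) (hθ : 0 < θ) (hρθ : 1 ≤ 2 * ρ ^ θ)
    (hsplit : ∀ A : Finset Ω, K < #A → ∃ i q, ∀ b, ρ * #A ≤ #{ω ∈ A | X ω i = e q b})
    (A : Finset Ω) : (#A / K) ^ θ ≤ #(shattered X e A) := by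
  induction A using Finset.strongInduction with | H A ih
  rcases le_or_gt (#A : ℝ) K with hAK | hKA
  · rcases A.eq_empty_or_nonempty with rfl | hA
    · simp [Real.zero_rpow hθ.ne']
    · have one_le : 1 ≤ #(shattered X e A) :=
        Finset.card_pos.2 ⟨_, mem_shattered.2 (shatters_none hA)⟩
      calc (#A / K : ℝ) ^ θ ≤ 1 :=
            Real.rpow_le_one (by positivity) ((div_le_one hK).2 hAK) hθ.le
        _ ≤ #(shattered X e A) := by exact_mod_cast one_le
  · obtain ⟨i, q, hiq⟩ := hsplit A hKA
    have hρA : 0 < ρ * #A := mul_pos hρ (hK.trans hKA)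
    have ssubset : ∀ b, {ω ∈ A | X ω i = e q b} ⊂ A := fun b => by
      obtain ⟨ω, hω⟩ := Finset.card_pos.1 (Nat.cast_pos.1 (hρA.trans_le (hiq !b)))
      obtain ⟨hωA, hωi⟩ := Finset.mem_filter.1 hω
      refine Finset.filter_ssubset.2 ⟨ω, hωA, fun hωi' => ?_⟩
      have hq := he q
      rw [hωi'] at hωi
      cases b
      exacts [hq hωi.symm, hq hωi]
    have le_part : ∀ b, (ρ * #A / K) ^ θ ≤ #(shattered X e {ω ∈ A | X ω i = e q b}) := fun b =>
      le_trans (by gcongr; exact hiq b) (ih _ (ssubset b))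
    calc (#A / K : ℝ) ^ θ ≤ 2 * ρ ^ θ * (#A / K) ^ θ :=
          le_mul_of_one_le_left (by positivity) hρθ
      _ = (ρ * #A / K) ^ θ + (ρ * #A / K) ^ θ := by
          rw [mul_div_assoc, Real.mul_rpow hρ.le (by positivity)]
          ring
      _ ≤ #(shattered X e {ω ∈ A | X ω i = e q true}) +
          #(shattered X e {ω ∈ A | X ω i = e q false}) := add_le_add (le_part _) (le_part _)
      _ ≤ #(shattered X e A) := by exact_mod_cast card_shattered_add_le he A i q

end Shattering

section Counting

variable {ι Q : Type*} [Fintype ι] [Fintype Q]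

theorem card_le_exp_of_card_isSome_le {k d : ℝ} (hk : 0 ≤ k) {S : Finset (ι → Option Q)}
    (hS : ∀ h ∈ S, (#{i | (h i).isSome} : ℝ) ≤ d) :
    #S ≤ Real.exp (k * d + Fintype.card Q * Real.exp (-k) * Fintype.card ι) := by
  classical
  let w : Option Q → ℝ := fun o => if o.isSome then Real.exp (-k) else 1
  have w_nonneg : ∀ o, 0 ≤ w o := fun o => by dsimp only [w]; split_ifs <;> positivity
  have prod_w : ∀ h : ι → Option Q, ∏ i, w (h i) = Real.exp (-(k * #{i | (h i).isSome})) :=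
    fun h => by simp [w, Finset.prod_ite, ← Real.exp_nat_mul, mul_comm]
  have weighted : #S * Real.exp (-(k * d)) ≤
      Real.exp (Fintype.card Q * Real.exp (-k) * Fintype.card ι) := by
    calc #S * Real.exp (-(k * d)) = ∑ _h ∈ S, Real.exp (-(k * d)) := by simp
      _ ≤ ∑ h ∈ S, ∏ i, w (h i) := Finset.sum_le_sum fun h hh => by
          rw [prod_w]
          gcongr
          exact hS h hh
      _ ≤ ∑ h : ι → Option Q, ∏ i, w (h i) :=
          Finset.sum_le_univ_sum_of_nonneg fun h => Finset.prod_nonneg fun i _ => w_nonneg _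
      _ = (Fintype.card Q * Real.exp (-k) + 1) ^ Fintype.card ι := by
          rw [← Fintype.piFinset_univ, ← Finset.prod_univ_sum]
          simp [w, Fintype.sum_option, add_comm]
      _ ≤ Real.exp (Fintype.card Q * Real.exp (-k)) ^ Fintype.card ι := by
          gcongr
          exact Real.add_one_le_exp _
      _ = _ := by rw [← Real.exp_nat_mul, mul_comm]
  rwa [Real.exp_neg, ← div_eq_mul_inv, div_le_iff₀ (Real.exp_pos _), ← Real.exp_add,
    add_comm] at weighted

theorem card_isSome_eq_sum_card_eq_some [DecidableEq Q] (h : ι → Option Q) :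
    #{i | (h i).isSome} = ∑ q, #{i | h i = some q} := by
  simp only [Finset.card_filter]
  rw [Finset.sum_comm]
  refine Finset.sum_congr rfl fun i _ => ?_
  cases h i <;> simp

end Counting

theorem exists_card_eq_some_ge (Q : Type*) [Finite Q] [DecidableEq Q] {α : ℝ} (hα : 0 < α) :
    ∃ c : ℝ, 0 < c ∧ ∀ {ι : Type*} [Fintype ι] [Nonempty ι] (S : Finset (ι → Option Q)),
      Real.exp (α * Fintype.card ι) ≤ #S →
        ∃ h ∈ S, ∃ q, c * Fintype.card ι ≤ #{i | h i = some q} := by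
  cases nonempty_fintype Q
  set p : ℝ := (Fintype.card Q : ℝ)
  set k : ℝ := 2 * p / α + 1 with hk
  have hp : p = α / 2 * (k - 1) := by rw [hk]; field_simp; ring
  have hp_exp : p * Real.exp (-k) < α / 2 := by
    rw [Real.exp_neg, ← div_eq_mul_inv, div_lt_iff₀ (Real.exp_pos k), hp]
    gcongr
    linarith [Real.add_one_le_exp k]
  refine ⟨α / (2 * k * (p + 1)), by positivity, fun {ι} _ _ S hS => ?_⟩
  by_contra! hcon
  set n : ℝ := (Fintype.card ι : ℝ)
  have hn : 0 < n := by simpa [n] using Fintype.card_pos (α := ι)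
  have support_le : ∀ h ∈ S, (#{i | (h i).isSome} : ℝ) ≤ p * (α / (2 * k * (p + 1)) * n) := by
    intro h hh
    rw [card_isSome_eq_sum_card_eq_some, Nat.cast_sum]
    simpa [p] using Finset.sum_le_sum fun q (_ : q ∈ Finset.univ) => (hcon h hh q).le
  have hexp := hS.trans (card_le_exp_of_card_isSome_le (k := k) (by positivity) support_le)
  have hkp : k * (p * (α / (2 * k * (p + 1)) * n)) ≤ α / 2 * n := by
    calc k * (p * (α / (2 * k * (p + 1)) * n)) = p / (p + 1) * (α / 2 * n) := by
          have : k ≠ 0 := by positivity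
          field_simp
      _ ≤ α / 2 * n :=
          mul_le_of_le_one_left (by positivity) ((div_le_one (by positivity)).2 (by linarith))
  have hpn : p * Real.exp (-k) * n < α / 2 * n := by gcongr
  linarith [Real.exp_le_exp.1 hexp]

theorem exists_pos_one_le_two_mul_rpow {ρ : ℝ} (hρ : 0 < ρ) : ∃ θ : ℝ, 0 < θ ∧ 1 ≤ 2 * ρ ^ θ := by
  have hcont : Continuous fun θ : ℝ => 2 * ρ ^ θ := by
    fun_prop (disch := exact hρ.ne')
  have hev : ∀ᶠ θ in nhds (0 : ℝ), 1 < 2 * ρ ^ θ :=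
    hcont.continuousAt.eventually_const_lt (by simp)
  obtain ⟨θ, hθ, hθ0⟩ := ((hev.filter_mono nhdsWithin_le_nhds).and
    (self_mem_nhdsWithin (s := Set.Ioi 0))).exists
  exact ⟨θ, hθ0, hθ.le⟩

theorem exists_card_ge_shattered_by_single_pair (Q : Type*) [Finite Q] {ρ β : ℝ} (hρ : 0 < ρ)
    (hβ : 0 < β) :
    ∃ c : ℝ, 0 < c ∧ ∀ {Ω ι L : Type*} [Fintype Ω] [Nonempty Ω] [Fintype ι] [Nonempty ι]
      [DecidableEq L] {X : Ω → ι → L} {e : Q → Bool → L}, (∀ q, e q true ≠ e q false) →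
      (∀ A : Finset Ω, Fintype.card Ω * Real.exp (-(β * Fintype.card ι)) < #A →
        ∃ i q, ∀ b, ρ * #A ≤ #{ω ∈ A | X ω i = e q b}) →
      ∃ q, ∃ I : Finset ι, c * Fintype.card ι ≤ #I ∧
        ∀ τ : ι → Bool, ∃ ω, ∀ i ∈ I, X ω i = e q (τ i) := by
  classical
  cases nonempty_fintype Q
  obtain ⟨θ, hθ, hρθ⟩ := exists_pos_one_le_two_mul_rpow hρ
  obtain ⟨c, hc, hcount⟩ := exists_card_eq_some_ge Q (mul_pos hβ hθ)
  refine ⟨c, hc, fun {Ω ι L} _ _ _ _ _ X e he hsplit => ?_⟩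
  have hΩ : (0 : ℝ) < Fintype.card Ω := by exact_mod_cast Fintype.card_pos
  have hexp : Real.exp (β * θ * Fintype.card ι) ≤ #(shattered X e Finset.univ) := by
    convert rpow_le_card_shattered he (by positivity) hρ hθ hρθ hsplit Finset.univ using 1
    rw [Finset.card_univ, div_mul_cancel_left₀ hΩ.ne', Real.exp_neg, inv_inv, ← Real.exp_mul]
    ring_nf
  obtain ⟨h, hh, q, hq⟩ := hcount _ hexp
  refine ⟨q, _, hq, fun τ => ?_⟩
  obtain ⟨ω, -, hω⟩ := mem_shattered.1 hh τ
  exact ⟨ω, fun i hi => hω i q (Finset.mem_filter.1 hi).2⟩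

section SignedSums

variable {ι : Type*} [Fintype ι]

theorem sum_exp_sum_units_smul_le [DecidableEq ι] {v : ι → ℝ} (hv : ∀ i, |v i| ≤ 1) (t : ℝ) :
    ∑ s : ι → ℤˣ, Real.exp (t * ∑ i, s i • v i) ≤
      2 ^ Fintype.card ι * Real.exp (t ^ 2 / 2 * Fintype.card ι) := by
  have factor_le : ∀ i, ∑ u : ℤˣ, Real.exp (t * (u • v i)) ≤ 2 * Real.exp (t ^ 2 / 2) := fun i => by
    have hcosh : ∑ u : ℤˣ, Real.exp (t * (u • v i)) = 2 * Real.cosh (t * v i) := by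
      rw [UnitsInt.univ, Finset.sum_pair (by decide), one_smul, Units.neg_smul, one_smul, mul_neg,
        Real.cosh_eq]
      ring
    have hsq : (t * v i) ^ 2 ≤ t ^ 2 := by
      rw [mul_pow]
      exact mul_le_of_le_one_right (sq_nonneg t) ((sq_le_one_iff_abs_le_one _).2 (hv i))
    rw [hcosh]
    gcongr
    exact (Real.cosh_le_exp_half_sq _).trans (by gcongr)
  calc ∑ s : ι → ℤˣ, Real.exp (t * ∑ i, s i • v i)
      = ∏ i, ∑ u : ℤˣ, Real.exp (t * (u • v i)) := by
        simp only [Finset.mul_sum, Real.exp_sum]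
        rw [Finset.prod_univ_sum, Fintype.piFinset_univ]
    _ ≤ ∏ _i : ι, 2 * Real.exp (t ^ 2 / 2) :=
        Finset.prod_le_prod (fun _ _ => by positivity) fun i _ => factor_le i
    _ = 2 ^ Fintype.card ι * Real.exp (t ^ 2 / 2 * Fintype.card ι) := by
        rw [Finset.prod_const, Finset.card_univ, mul_pow, ← Real.exp_nat_mul, mul_comm (t ^ 2 / 2)]

-- Average the inequality `x + 1 ≤ exp x` at `x = κ |∑ s i • v i| - κ² n` over `A`.
theorem sum_abs_sum_units_smul_le {v : ι → ℝ} (hv : ∀ i, |v i| ≤ 1) {κ : ℝ} (hκ : 0 < κ)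
    {A : Finset (ι → ℤˣ)}
    (hA : 2 * 2 ^ Fintype.card ι * Real.exp (-(κ ^ 2 / 2 * Fintype.card ι)) ≤ #A) :
    ∑ s ∈ A, |∑ i, s i • v i| ≤ κ * Fintype.card ι * #A := by
  classical
  set n : ℝ := (Fintype.card ι : ℝ)
  let V : (ι → ℤˣ) → ℝ := fun s => ∑ i, s i • v i
  have hexp : ∑ s ∈ A, Real.exp (κ * |V s|) ≤ Real.exp (κ ^ 2 * n) * #A := by
    calc ∑ s ∈ A, Real.exp (κ * |V s|) ≤ ∑ s, Real.exp (κ * |V s|) :=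
          Finset.sum_le_univ_sum_of_nonneg fun s => (Real.exp_pos _).le
      _ ≤ ∑ s, (Real.exp (κ * V s) + Real.exp (-κ * V s)) := Finset.sum_le_sum fun s _ => by
          simpa [abs_mul, abs_of_pos hκ] using Real.exp_abs_le (κ * V s)
      _ ≤ 2 ^ Fintype.card ι * Real.exp (κ ^ 2 / 2 * n) +
          2 ^ Fintype.card ι * Real.exp ((-κ) ^ 2 / 2 * n) := by
          rw [Finset.sum_add_distrib]
          exact add_le_add (sum_exp_sum_units_smul_le hv κ) (sum_exp_sum_units_smul_le hv (-κ))
      _ = Real.exp (κ ^ 2 * n) * (2 * 2 ^ Fintype.card ι * Real.exp (-(κ ^ 2 / 2 * n))) := by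
          rw [mul_left_comm, ← Real.exp_add]
          ring_nf
      _ ≤ Real.exp (κ ^ 2 * n) * #A := by gcongr
  have hlin : ∑ s ∈ A, (κ * |V s| - κ ^ 2 * n + 1) ≤ (#A : ℝ) := by
    calc ∑ s ∈ A, (κ * |V s| - κ ^ 2 * n + 1) ≤ ∑ s ∈ A, Real.exp (κ * |V s| - κ ^ 2 * n) :=
          Finset.sum_le_sum fun s _ => Real.add_one_le_exp _
      _ = (∑ s ∈ A, Real.exp (κ * |V s|)) / Real.exp (κ ^ 2 * n) := by
          simp only [Real.exp_sub, Finset.sum_div]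
      _ ≤ #A := (div_le_iff₀' (Real.exp_pos _)).2 hexp
  simp only [Finset.sum_add_distrib, Finset.sum_sub_distrib, ← Finset.mul_sum, Finset.sum_const,
    nsmul_eq_mul] at hlin
  refine le_of_mul_le_mul_left ?_ hκ
  linarith

variable {E L : Type*} [SeminormedAddCommGroup E] [Fintype L] {z : L → E}

theorem norm_sum_units_smul_comp_le [DecidableEq L] (hz : ∀ a, ‖z a‖ ≤ 1) (x : ι → L) (s : ι → ℤˣ) :
    ‖∑ i, s i • z (x i)‖ ≤ ∑ a, |∑ i, s i • if x i = a then (1 : ℝ) else 0| := by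
  have fiber_sum : ∀ a, ∑ i with x i = a, s i • z (x i) = (∑ i with x i = a, (s i : ℤ)) • z a := by
    intro a
    rw [Finset.sum_smul]
    refine Finset.sum_congr rfl fun i hi => ?_
    rw [(Finset.mem_filter.1 hi).2, Units.smul_def]
  rw [← Finset.sum_fiberwise _ x]
  refine (norm_sum_le _ _).trans (Finset.sum_le_sum fun a _ => ?_)
  rw [fiber_sum]
  calc ‖(∑ i with x i = a, (s i : ℤ)) • z a‖
      ≤ ‖∑ i with x i = a, (s i : ℤ)‖ * ‖z a‖ := norm_zsmul_le _ _
    _ ≤ ‖∑ i with x i = a, (s i : ℤ)‖ := mul_le_of_le_one_right (norm_nonneg _) (hz a)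
    _ = |∑ i, s i • if x i = a then (1 : ℝ) else 0| := by
        simp [Int.norm_eq_abs, Finset.sum_filter, Units.smul_def]

theorem sum_norm_sum_units_smul_comp_le (hz : ∀ a, ‖z a‖ ≤ 1) (x : ι → L) {κ : ℝ} (hκ : 0 < κ)
    {A : Finset (ι → ℤˣ)}
    (hA : 2 * 2 ^ Fintype.card ι * Real.exp (-(κ ^ 2 / 2 * Fintype.card ι)) ≤ #A) :
    ∑ s ∈ A, ‖∑ i, s i • z (x i)‖ ≤ Fintype.card L * κ * Fintype.card ι * #A := by
  classical
  calc ∑ s ∈ A, ‖∑ i, s i • z (x i)‖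
      ≤ ∑ s ∈ A, ∑ a, |∑ i, s i • if x i = a then (1 : ℝ) else 0| :=
        Finset.sum_le_sum fun s _ => norm_sum_units_smul_comp_le hz x s
    _ = ∑ a, ∑ s ∈ A, |∑ i, s i • if x i = a then (1 : ℝ) else 0| := Finset.sum_comm
    _ ≤ ∑ _a : L, κ * Fintype.card ι * #A := Finset.sum_le_sum fun a _ =>
        sum_abs_sum_units_smul_le (fun i => by split_ifs <;> simp) hκ hA
    _ = Fintype.card L * κ * Fintype.card ι * #A := by simp [mul_assoc]

end SignedSums

section Splitting

variable {E L : Type*} [SeminormedAddCommGroup E] [Fintype L] [DecidableEq L] {z : L → E}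
  {D η ρ : ℝ}

theorem exists_card_mul_le_card_eq {Ω : Type*} [Nonempty L] (x : Ω → L) (A : Finset Ω)
    (hρL : ρ * Fintype.card L ≤ 1) : ∃ a, ρ * #A ≤ #{ω ∈ A | x ω = a} := by
  obtain ⟨a, -, ha⟩ := Finset.exists_le_of_sum_le (s := Finset.univ) (f := fun _ : L => ρ * #A)
    (g := fun a => (#{ω ∈ A | x ω = a} : ℝ)) Finset.univ_nonempty (by
      rw [← Nat.cast_sum, ← Finset.card_eq_sum_card_fiberwise (by simp)]
      simpa [mul_comm, mul_left_comm, mul_assoc] using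
        mul_le_mul_of_nonneg_right hρL (Nat.cast_nonneg #A))
  exact ⟨a, ha⟩

theorem exists_sum_norm_sub_le_of_no_split {Ω : Type*} [Nonempty L] (hz : ∀ a, ‖z a‖ ≤ 1)
    (hρ : 0 ≤ ρ) (hρL : ρ * Fintype.card L ≤ 1) (hDη : 0 ≤ D + η) {G : Ω → E}
    (hG : ∀ ω, ‖G ω‖ ≤ 1) {x : Ω → L} (hx : ∀ ω, dist (G ω) (z (x ω)) ≤ η) {A : Finset Ω}
    (hA : ∀ q : Bool → L, D ≤ dist (z (q true)) (z (q false)) →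
      ∃ b, (#{ω ∈ A | x ω = q b} : ℝ) < ρ * #A) :
    ∃ a, ∑ ω ∈ A, ‖G ω - z a‖ ≤ (D + η + 2 * ρ * Fintype.card L) * #A := by
  obtain ⟨a, ha⟩ := exists_card_mul_le_card_eq x A hρL
  have sum_fiber_le : ∀ b, ∑ ω ∈ A with x ω = b, ‖G ω - z a‖ ≤
      (D + η) * #{ω ∈ A | x ω = b} + 2 * (ρ * #A) := by
    intro b
    have bound : ∀ C : ℝ, (∀ ω, x ω = b → ‖G ω - z a‖ ≤ C) →
        ∑ ω ∈ A with x ω = b, ‖G ω - z a‖ ≤ C * #{ω ∈ A | x ω = b} := fun C hC => by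
      rw [mul_comm, ← nsmul_eq_mul]
      exact Finset.sum_le_card_nsmul _ _ _ fun ω hω => hC ω (Finset.mem_filter.1 hω).2
    rcases le_or_gt D (dist (z a) (z b)) with hfar | hnear
    · have hb : (#{ω ∈ A | x ω = b} : ℝ) < ρ * #A := by
        obtain ⟨c, hc⟩ := hA (fun c => cond c a b) hfar
        cases c
        exacts [hc, absurd ha (not_le.2 hc)]
      have := bound 2 fun ω _ => (norm_sub_le _ _).trans (by linarith [hG ω, hz a])
      have : 0 ≤ (D + η) * #{ω ∈ A | x ω = b} := by positivity
      linarith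
    · have := bound (D + η) fun ω hω => by
        rw [← dist_eq_norm]
        have := hω ▸ hx ω
        linarith [dist_triangle_right (G ω) (z a) (z b)]
      have : 0 ≤ ρ * #A := by positivity
      linarith
  refine ⟨a, ?_⟩
  calc ∑ ω ∈ A, ‖G ω - z a‖ = ∑ b, ∑ ω ∈ A with x ω = b, ‖G ω - z a‖ :=
        (Finset.sum_fiberwise _ _ _).symm
    _ ≤ ∑ b, ((D + η) * #{ω ∈ A | x ω = b} + 2 * (ρ * #A)) :=
        Finset.sum_le_sum fun b _ => sum_fiber_le b
    _ = (D + η + 2 * ρ * Fintype.card L) * #A := by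
        rw [Finset.sum_add_distrib, ← Finset.mul_sum, ← Nat.cast_sum,
          ← Finset.card_eq_sum_card_fiberwise (by simp), Finset.sum_const, Finset.card_univ,
          nsmul_eq_mul]
        ring

theorem exists_split {ι : Type*} [Fintype ι] [Nonempty ι] (hz : ∀ a, ‖z a‖ ≤ 1) {δ κ : ℝ}
    (hκ : 0 < κ) (hρ : 0 ≤ ρ) (hρL : ρ * Fintype.card L ≤ 1) (hDη : 0 ≤ D + η)
    (hδ : Fintype.card L * κ + (D + η + 2 * ρ * Fintype.card L) < δ)
    {F : (ι → ℤˣ) → ι → E} (hF : ∀ s i, ‖F s i‖ ≤ 1)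
    (hsum : ∀ s, δ * Fintype.card ι ≤ ‖∑ i, s i • F s i‖)
    {X : (ι → ℤˣ) → ι → L} (hX : ∀ s i, dist (F s i) (z (X s i)) ≤ η) {A : Finset (ι → ℤˣ)}
    (hA : 2 * 2 ^ Fintype.card ι * Real.exp (-(κ ^ 2 / 2 * Fintype.card ι)) ≤ #A) :
    ∃ i, ∃ q : Bool → L, D ≤ dist (z (q true)) (z (q false)) ∧
      ∀ b, ρ * #A ≤ #{s ∈ A | X s i = q b} := by
  have : Nonempty L := ⟨X 1 (Classical.arbitrary ι)⟩
  by_contra! hcon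
  choose x hx using fun i => exists_sum_norm_sub_le_of_no_split hz hρ hρL hDη
    (fun s => hF s i) (fun s => hX s i) (hcon i)
  set n : ℝ := (Fintype.card ι : ℝ)
  have le_add : ∀ s, δ * n ≤ ‖∑ i, s i • z (x i)‖ + ∑ i, ‖F s i - z (x i)‖ := fun s =>
    calc δ * n ≤ ‖∑ i, s i • F s i‖ := hsum s
      _ = ‖∑ i, s i • z (x i) + ∑ i, s i • (F s i - z (x i))‖ := by
          simp only [smul_sub, Finset.sum_sub_distrib, add_sub_cancel]
      _ ≤ ‖∑ i, s i • z (x i)‖ + ∑ i, ‖F s i - z (x i)‖ := by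
          refine (norm_add_le _ _).trans (add_le_add le_rfl ((norm_sum_le _ _).trans_eq ?_))
          simp only [norm_units_zsmul]
  have sum_le : #A * (δ * n) ≤
      (Fintype.card L * κ + (D + η + 2 * ρ * Fintype.card L)) * (n * #A) :=
    calc #A * (δ * n) = ∑ _s ∈ A, δ * n := by simp
      _ ≤ ∑ s ∈ A, ‖∑ i, s i • z (x i)‖ + ∑ i, ∑ s ∈ A, ‖F s i - z (x i)‖ := by
          rw [Finset.sum_comm (s := Finset.univ), ← Finset.sum_add_distrib]
          exact Finset.sum_le_sum fun s _ => le_add s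
      _ ≤ Fintype.card L * κ * n * #A +
          ∑ _i : ι, (D + η + 2 * ρ * Fintype.card L) * #A :=
          add_le_add (sum_norm_sum_units_smul_comp_le hz x hκ hA)
            (Finset.sum_le_sum fun i _ => hx i)
      _ = _ := by
          rw [Finset.sum_const, Finset.card_univ, nsmul_eq_mul]
          ring
  have hApos : (0 : ℝ) < #A := lt_of_lt_of_le (by positivity) hA
  have hn : 0 < n := by simpa [n] using Fintype.card_pos (α := ι)
  have := mul_lt_mul_of_pos_right hδ (mul_pos hn hApos)
  linarith

end Splitting

theorem exists_finset_net_closedBall (E : Type*) [SeminormedAddCommGroup E] [ProperSpace E] {η : ℝ}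
    (hη : 0 < η) :
    ∃ T : Finset E, (∀ a ∈ T, ‖a‖ ≤ 1) ∧ ∀ x : E, ‖x‖ ≤ 1 → ∃ a : T, dist x a ≤ η := by
  obtain ⟨t, ht, htfin, hcover⟩ := (isCompact_closedBall (0 : E) 1).finite_cover_balls hη
  refine ⟨htfin.toFinset, fun a ha => mem_closedBall_zero_iff.1 (ht (htfin.mem_toFinset.1 ha)),
    fun x hx => ?_⟩
  obtain ⟨a, ha, hxa⟩ := Set.mem_iUnion₂.1 (hcover (mem_closedBall_zero_iff.2 hx))
  exact ⟨⟨a, htfin.mem_toFinset.2 ha⟩, (mem_ball.1 hxa).le⟩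

theorem two_mul_exp_neg_le_exp_neg_half {β x : ℝ} (hβ : 0 < β) (hx : 2 / β ≤ x) :
    2 * Real.exp (-(β * x)) ≤ Real.exp (-(β / 2 * x)) := by
  have h2 : 2 ≤ β * x := (div_le_iff₀' hβ).1 hx
  calc 2 * Real.exp (-(β * x)) ≤ Real.exp (β / 2 * x) * Real.exp (-(β * x)) := by
        gcongr
        linarith [Real.add_one_le_exp (β / 2 * x)]
    _ = Real.exp (-(β / 2 * x)) := by
        rw [← Real.exp_add]
        ring_nf

-- Balls of radius `δ / 60` around labels `14 * (δ / 60)` apart have gap `12 * (δ / 60)`, while a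
-- coordinate without distant labels is within `15 * (δ / 60)` of a constant, well below `δ`.
theorem exists_indepPairs_closedBall (E : Type*) [SeminormedAddCommGroup E] [ProperSpace E] {δ : ℝ}
    (hδ : 0 < δ) :
    ∃ c : ℝ, 0 < c ∧ ∃ N : ℕ, ∀ {Y ι : Type*} [Fintype ι] (f : ι → Y → E), N ≤ Fintype.card ι →
      (∀ i y, ‖f i y‖ ≤ 1) →
      (∀ s : ι → ℤˣ, ∃ y, δ * Fintype.card ι ≤ ‖∑ i, s i • f i y‖) →
      ∃ z₁ z₂ : E, 14 * (δ / 60) ≤ dist z₁ z₂ ∧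
        ∃ I : Finset ι, c * Fintype.card ι ≤ #I ∧
          IndepPairs (fun i => f i ⁻¹' closedBall z₁ (δ / 60))
            (fun i => f i ⁻¹' closedBall z₂ (δ / 60)) I := by
  classical
  obtain ⟨T, hT, hnet⟩ := exists_finset_net_closedBall E (η := δ / 60) (by positivity)
  have : Nonempty T := (hnet 0 (by simp)).nonempty
  set l : ℝ := (Fintype.card T : ℝ)
  have hl : 0 < l := by simpa [l] using Fintype.card_pos (α := T)
  obtain ⟨ρ, hρ, hρl⟩ : ∃ ρ, 0 < ρ ∧ ρ * l ≤ min 1 (δ / 8) :=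
    ⟨min 1 (δ / 8) / l, by positivity, (div_mul_cancel₀ _ hl.ne').le⟩
  obtain ⟨hρ1, hρδ⟩ := le_min_iff.1 hρl
  let Q := {q : Bool → T // 14 * (δ / 60) ≤ dist (q true : E) (q false)}
  obtain ⟨c, hc, hshatter⟩ := exists_card_ge_shattered_by_single_pair Q hρ
    (β := ρ ^ 2 / 2 / 2) (by positivity)
  refine ⟨c, hc, ⌈2 / (ρ ^ 2 / 2)⌉₊, fun {Y ι} _ f hN hf hsum => ?_⟩
  have : Nonempty ι := Fintype.card_pos_iff.1 ((Nat.ceil_pos.2 (by positivity)).trans_le hN)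
  choose y hy using hsum
  choose X hX using fun (s : ι → ℤˣ) i => hnet (f i (y s)) (hf i (y s))
  have ne : ∀ q : Q, q.1 true ≠ q.1 false := fun q hq => by
    have := q.2
    rw [hq, dist_self] at this
    linarith
  have large : 2 * 2 ^ Fintype.card ι * Real.exp (-(ρ ^ 2 / 2 * Fintype.card ι)) ≤
      Fintype.card (ι → ℤˣ) * Real.exp (-(ρ ^ 2 / 2 / 2 * Fintype.card ι)) := by
    rw [mul_comm 2, mul_assoc]
    simpa using two_mul_exp_neg_le_exp_neg_half (by positivity) (Nat.ceil_le.1 hN)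
  have split : ∀ A : Finset (ι → ℤˣ), Fintype.card (ι → ℤˣ) *
      Real.exp (-(ρ ^ 2 / 2 / 2 * Fintype.card ι)) < #A →
      ∃ i, ∃ q : Q, ∀ b, ρ * #A ≤ #{s ∈ A | X s i = q.1 b} := fun A hA => by
    obtain ⟨i, q, hq, hqA⟩ := exists_split (z := ((↑) : T → E)) (fun a => hT a a.2) hρ hρ.le hρ1
      (D := 14 * (δ / 60)) (by positivity) (by linarith) (fun s i => hf i (y s)) hy hX
      (large.trans hA.le)
    exact ⟨i, ⟨q, hq⟩, hqA⟩
  obtain ⟨⟨q, hq⟩, I, hcI, hI⟩ := hshatter ne split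
  refine ⟨q true, q false, hq, I, hcI, fun S hS σ => ?_⟩
  obtain ⟨s, hs⟩ := hI σ
  refine ⟨y s, Set.mem_iInter₂.2 fun i hi => ?_⟩
  have hi' := hs i (hS hi) ▸ hX s i
  cases hσ : σ i <;> simpa [hσ] using hi'

theorem exists_point_le_norm {Y E : Type*} [TopologicalSpace Y] [CompactSpace Y]
    [SeminormedAddCommGroup E] {g : C(Y, E)} {r : ℝ} (hr : 0 < r) (hg : r ≤ ‖g‖) :
    ∃ y, r ≤ ‖g y‖ := by
  by_contra! hlt
  exact hg.not_gt ((g.norm_lt_iff hr).2 hlt)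

theorem stmt16_general (E : Type*) [SeminormedAddCommGroup E] [ProperSpace E] {δ : ℝ}
    (hδ : 0 < δ) :
    ∃ (c ε : ℝ) (N : ℕ), 0 < c ∧ 0 < ε ∧
      ∀ (Y : Type*) [TopologicalSpace Y] [CompactSpace Y],
        ∀ Θ : Finset C(Y, E), N ≤ #Θ →
          (∀ f ∈ Θ, ‖f‖ ≤ 1) →
          (∀ s : C(Y, E) → ℤˣ, δ * #Θ ≤ ‖∑ f ∈ Θ, s f • f‖) →
          ∃ (z₁ z₂ : E) (r₁ r₂ : ℝ), 0 ≤ r₁ ∧ 0 ≤ r₂ ∧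
            2 * r₁ ≤ ε / 6 ∧ 2 * r₂ ≤ ε / 6 ∧
            (∀ w₁ ∈ closedBall z₁ r₁, ∀ w₂ ∈ closedBall z₂ r₂, ε ≤ dist w₁ w₂) ∧
            ∃ I : Finset C(Y, E), I ⊆ Θ ∧ c * #Θ ≤ #I ∧
              IndepPairs (fun f : C(Y, E) => f ⁻¹' closedBall z₁ r₁)
                (fun f : C(Y, E) => f ⁻¹' closedBall z₂ r₂) I := by
  obtain ⟨c, hc, N, h⟩ := exists_indepPairs_closedBall E hδ
  refine ⟨c, 12 * (δ / 60), max N 1, hc, by positivity, fun Y _ _ Θ hN hΘ hsum => ?_⟩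
  have hΘpos : 0 < #Θ := (le_max_right _ _).trans hN
  have exists_point : ∀ s : Θ → ℤˣ, ∃ y, δ * Fintype.card Θ ≤ ‖∑ f : Θ, s f • f.1 y‖ := by
    intro s
    have hs := hsum (Function.extend Subtype.val s 1)
    rw [← Finset.sum_coe_sort] at hs
    simp only [Subtype.val_injective.extend_apply] at hs
    obtain ⟨y, hy⟩ := exists_point_le_norm (by positivity) hs
    exact ⟨y, by simpa [Units.smul_def] using hy⟩
  obtain ⟨z₁, z₂, hz, I, hcI, hI⟩ := h (fun f : Θ => ⇑f.1)
    (by simpa using (le_max_left _ _).trans hN)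
    (fun f y => (f.1.norm_coe_le_norm y).trans (hΘ f f.2)) exists_point
  refine ⟨z₁, z₂, δ / 60, δ / 60, by positivity, by positivity, by linarith, by linarith,
    fun w₁ hw₁ w₂ hw₂ => ?_, I.map (.subtype _), fun f hf => ?_, by simpa using hcI, hI.map _⟩
  · rw [mem_closedBall] at hw₁ hw₂
    linarith [dist_triangle4_left w₁ z₁ z₂ w₂, dist_triangle4 z₁ w₁ w₂ z₂, dist_comm z₁ w₁]
  · obtain ⟨g, -, rfl⟩ := Finset.mem_map.1 hf
    exact g.2

/-- Lemma: an `ℓ₁`-isomorphism with lower bound `δ` on a large finite set `Θ` of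
functions in the unit ball of `C(Y)` produces two well-separated small closed disks
`B₁, B₂ ⊆ ℂ` and a proportional subset `I ⊆ Θ` such that the pairs
`(f⁻¹(B₁), f⁻¹(B₂))` for `f ∈ I` are independent. -/
theorem stmt16 :
    ∀ δ : ℝ, 0 < δ →
      ∃ (c ε : ℝ) (N : ℕ), 0 < c ∧ 0 < ε ∧
        ∀ (Y : Type) [TopologicalSpace Y] [CompactSpace Y] [T2Space Y],
          ∀ Θ : Finset C(Y, ℂ), N ≤ Θ.card →
            (∀ f ∈ Θ, ‖f‖ ≤ 1) →
            (∀ co : C(Y, ℂ) → ℂ, δ * ∑ f ∈ Θ, ‖co f‖ ≤ ‖∑ f ∈ Θ, co f • f‖) →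
            ∃ (z₁ z₂ : ℂ) (r₁ r₂ : ℝ), 0 ≤ r₁ ∧ 0 ≤ r₂ ∧
              2 * r₁ ≤ ε / 6 ∧ 2 * r₂ ≤ ε / 6 ∧
              (∀ w₁ ∈ closedBall z₁ r₁, ∀ w₂ ∈ closedBall z₂ r₂, ε ≤ dist w₁ w₂) ∧
              ∃ I : Finset C(Y, ℂ), I ⊆ Θ ∧ c * (Θ.card : ℝ) ≤ (I.card : ℝ) ∧
                IndepPairs (fun f : C(Y, ℂ) => (⇑f) ⁻¹' closedBall z₁ r₁)
                  (fun f : C(Y, ℂ) => (⇑f) ⁻¹' closedBall z₂ r₂) (↑I : Set C(Y, ℂ)) := by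
  intro δ hδ
  obtain ⟨c, ε, N, hc, hε, h⟩ := stmt16_general ℂ hδ
  exact ⟨c, ε, N, hc, hε, fun Y _ _ _ Θ hN hΘ hco => h Y Θ hN hΘ fun s => by
    simpa only [Units.smul_def, Int.cast_smul_eq_zsmul, Complex.norm_intCast, abs_unit_intCast,
      Finset.sum_const, nsmul_eq_mul, mul_one] using hco fun f => ((s f : ℤ) : ℂ)⟩
end

section
/- Let G be a discrete amenable group and let (Y,𝒴,ν,G) and (Z,𝒵,ω,G) be measure-preserving G-systems. Suppose that (Y,𝒴,ν,G) has zero entropy, i.e., h_ν(𝒫) = 0 for every finite measurable partition 𝒫 of Y, and that (Z,𝒵,ω,G) has completely positive entropy, i.e., every finite measurable partition 𝒬 of Z with h_ω(𝒬) = 0 is trivial modulo ω (each atom of 𝒬 has ω-measure 0 or 1). Then the two systems are disjoint: the only G-invariant probability measure on (Y × Z, 𝒴 ⊗ 𝒵) whose marginals are ν and ω, where G acts diagonally by s(y,z) = (sy, sz), is the product measure ν × ω. -/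
open MeasureTheory Set
open scoped Classical ENNReal

/-- `F` is a nonempty `(K,δ)`-invariant finite subset of the group `G`. -/
def FolnerInv {G : Type*} [Group G] (K : Finset G) (δ : ℝ) (F : Finset G) : Prop :=
  F.Nonempty ∧
    (1 - δ) * (F.card : ℝ) ≤ (((F : Set G)) ∩ {s : G | ∀ g ∈ K, g * s ∈ F}).ncard

/-- The Følner characterisation of amenability for a discrete group `G`. -/
def FolnerAmenable (G : Type*) [Group G] : Prop :=
  ∀ (K : Finset G) (δ : ℝ), 0 < δ → ∃ F : Finset G, FolnerInv K δ F

/-- The limit supremum of `ψ F / |F|` as `F` becomes more and more invariant. -/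
noncomputable def invLimsup {G : Type*} [Group G] (ψ : Finset G → ℝ) : ℝ :=
  ⨅ (K : Finset G) (δ : {d : ℝ // 0 < d}),
    sSup ((fun F : Finset G => ψ F / (F.card : ℝ)) '' {F : Finset G | FolnerInv K δ.1 F})

/-- The limit infimum of `ψ F / |F|` as `F` becomes more and more invariant. -/
noncomputable def invLiminf {G : Type*} [Group G] (ψ : Finset G → ℝ) : ℝ :=
  ⨆ (K : Finset G) (δ : {d : ℝ // 0 < d}),
    sInf ((fun F : Finset G => ψ F / (F.card : ℝ)) '' {F : Finset G | FolnerInv K δ.1 F})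

/-- `J ⊆ G` is an independence set for the tuple `A` of subsets of `X` relative to the
map `D : G → Set X`. -/
def IndepRel {G X : Type*} [Group G] [MulAction G X] {k : ℕ} (A : Fin k → Set X)
    (D : G → Set X) (J : Set G) : Prop :=
  ∀ F : Finset G, (F : Set G) ⊆ J → F.Nonempty → ∀ σ : G → Fin k,
    (⋂ s ∈ F, (D s ∩ (fun x => s • x) ⁻¹' A (σ s))).Nonempty

/-- `J ⊆ G` is an independence set for the tuple `A` relative to the subset `D ⊆ X`. -/
def IndepSet {G X : Type*} [Group G] [MulAction G X] {k : ℕ} (A : Fin k → Set X)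
    (D : Set X) (J : Set G) : Prop :=
  IndepRel A (fun _ => D) J

/-- The maximum of `|F ∩ J|` over independence sets `J` for `A` relative to `D`. -/
noncomputable def maxIndep {G X : Type*} [Group G] [MulAction G X] {k : ℕ}
    (A : Fin k → Set X) (D : G → Set X) (F : Finset G) : ℕ :=
  sSup {m : ℕ | ∃ J : Set G, IndepRel A D J ∧ m = (((F : Set G)) ∩ J).ncard}

/-- `φ_{A,δ}(F)`: the minimum over Borel sets `D` with `μ(D) ≥ 1 - δ` of the maximum
of `|F ∩ J|` over independence sets `J` for `A` relative to `D`. -/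
noncomputable def phiConst {G X : Type*} [Group G] [MulAction G X] [MeasurableSpace X]
    (μ : Measure X) {k : ℕ} (A : Fin k → Set X) (δ : ℝ) (F : Finset G) : ℕ :=
  sInf {m : ℕ | ∃ D : Set X, MeasurableSet D ∧ 1 - δ ≤ (μ D).toReal ∧
    m = maxIndep A (fun _ : G => D) F}

/-- `φ'_{A,δ}(F)`: as `phiConst` but with maps `D : G → Set X` with `μ(D s) ≥ 1 - δ`
for all `s`. -/
noncomputable def phiMap {G X : Type*} [Group G] [MulAction G X] [MeasurableSpace X]
    (μ : Measure X) {k : ℕ} (A : Fin k → Set X) (δ : ℝ) (F : Finset G) : ℕ :=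
  sInf {m : ℕ | ∃ D : G → Set X, (∀ s, MeasurableSet (D s)) ∧
    (∀ s, 1 - δ ≤ (μ (D s)).toReal) ∧ m = maxIndep A D F}

/-- The upper `μ`-independence density `Ī_μ(A)` of the tuple `A`. -/
noncomputable def upperIndepDens (G : Type*) {X : Type*} [Group G] [MulAction G X]
    [MeasurableSpace X] (μ : Measure X) {k : ℕ} (A : Fin k → Set X) : ℝ :=
  ⨆ δ : {d : ℝ // 0 < d}, invLimsup (fun F : Finset G => (phiConst μ A δ.1 F : ℝ))

/-- The lower `μ`-independence density `I̲_μ(A)` of the tuple `A`. -/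
noncomputable def lowerIndepDens (G : Type*) {X : Type*} [Group G] [MulAction G X]
    [MeasurableSpace X] (μ : Measure X) {k : ℕ} (A : Fin k → Set X) : ℝ :=
  ⨆ δ : {d : ℝ // 0 < d}, invLiminf (fun F : Finset G => (phiConst μ A δ.1 F : ℝ))

/-- The measure `μ` is invariant under the action of `G`. -/
def InvariantMeasure (G : Type*) {X : Type*} [Group G] [MulAction G X] [MeasurableSpace X]
    (μ : Measure X) : Prop :=
  ∀ (s : G) (B : Set X), MeasurableSet B → μ ((fun x => s • x) ⁻¹' B) = μ B

/-- The entropy `H_μ(𝒫^F)` of the join `⋁_{s ∈ F} s⁻¹𝒫` of the finite partition `P`. -/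
noncomputable def HJoin {G X : Type*} [Group G] [MulAction G X] [MeasurableSpace X]
    (μ : Measure X) {k : ℕ} (P : Fin k → Set X) (F : Finset G) : ℝ :=
  ∑ f : ↥F → Fin k,
    Real.negMulLog (μ (⋂ s : ↥F, (fun x => (s : G) • x) ⁻¹' P (f s))).toReal

/-- `P` is a finite measurable partition of `X` (members may be empty). -/
def IsMeasPartition {X : Type*} [MeasurableSpace X] {k : ℕ} (P : Fin k → Set X) : Prop :=
  (∀ i, MeasurableSet (P i)) ∧ (Pairwise fun i j => Disjoint (P i) (P j)) ∧
    (⋃ i, P i) = Set.univ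

/-- `x` is a (topological) IE-tuple for the action of `G` on `X`. -/
def IsIETuple (G : Type*) {X : Type*} [Group G] [TopologicalSpace X] [MulAction G X]
    {k : ℕ} (x : Fin k → X) : Prop :=
  ∀ U : Fin k → Set X, (∀ i, U i ∈ nhds (x i)) →
    ∃ d : ℝ, 0 < d ∧ ∀ (K : Finset G) (δ : ℝ), 0 < δ →
      ∃ (F : Finset G) (J : Set G), FolnerInv K δ F ∧ IndepSet U (Set.univ : Set X) J ∧
        d * (F.card : ℝ) ≤ (((F : Set G)) ∩ J).ncard

/-- `x` is a `μ`-IE-tuple. -/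
def IsMuIETuple (G : Type*) {X : Type*} [Group G] [TopologicalSpace X] [MulAction G X]
    [MeasurableSpace X] (μ : Measure X) {k : ℕ} (x : Fin k → X) : Prop :=
  ∀ U : Fin k → Set X, (∀ i, U i ∈ nhds (x i)) → 0 < upperIndepDens G μ U

/-!
Fix a joining `ρ` and a measurable `A ⊆ Y`, and let `φ z` be the conditional probability of `A`
given `z`. Given `z`, draw `n` conditionally independent points of `Y`: by Chebyshev's inequality
the proportion of them that lie in `A` is close to `φ z`, so it predicts the set `{z | c < φ z}` up
to a small error `e`, provided that `φ` does not charge `c`. Along a finite `F ⊆ G` this prediction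
uses `n` words of the partition `𝒫 = {A, Aᶜ}`, whose joint entropy is at most `n · H(𝒫^F) = o(|F|)`,
and by Fano's inequality the errors add at most `|F|` times the entropy of an event of probability
`e`. So the partition of `Z` given by `{z | c < φ z}` has zero entropy, hence is trivial, for all
but countably many `c`. Therefore `φ` is almost surely constant, which says that `A` is independent
of `Z`.
-/

open ProbabilityTheory

section Entropy

variable {Ω α β τ : Type*} [MeasurableSpace Ω]
  [MeasurableSpace α] [MeasurableSpace β] [MeasurableSpace τ]

/-- The Shannon entropy of a law `μ` on a finite type, as the mean of the information
`-log μ{a}`; the entropy of a random variable `X` on `(Ω, μ)` is `shannonEntropy (μ.map X)`. -/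
noncomputable def shannonEntropy (μ : Measure α) : ℝ :=
  ∫ a, -Real.log (μ.real {a}) ∂μ

theorem ae_measureReal_singleton_ne_zero [Countable α] (μ : Measure α) [IsFiniteMeasure μ] :
    ∀ᵐ a ∂μ, μ.real {a} ≠ 0 := by
  rw [ae_iff_of_countable]
  intro a ha
  rwa [measureReal_ne_zero_iff]

theorem shannonEntropy_nonneg (μ : Measure α) [IsProbabilityMeasure μ] :
    0 ≤ shannonEntropy μ :=
  integral_nonneg fun _ ↦
    neg_nonneg.2 (Real.log_nonpos measureReal_nonneg measureReal_le_one)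

variable [MeasurableSingletonClass α] [MeasurableSingletonClass β] [MeasurableSingletonClass τ]

theorem shannonEntropy_eq_sum_negMulLog [Fintype α] (μ : Measure α) [IsFiniteMeasure μ] :
    shannonEntropy μ = ∑ a, Real.negMulLog (μ.real {a}) := by
  rw [shannonEntropy, integral_fintype .of_finite]
  simp only [Real.negMulLog, smul_eq_mul, mul_neg, neg_mul]

theorem shannonEntropy_le_integral_neg_log [Fintype α] (μ : Measure α) [IsProbabilityMeasure μ]
    {q : α → ℝ} (hq : ∀ a, 0 ≤ q a) (hsum : ∑ a, q a ≤ 1) (hac : ∀ᵐ a ∂μ, q a ≠ 0) :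
    shannonEntropy μ ≤ ∫ a, -Real.log (q a) ∂μ := by
  have hgap : ∀ᵐ a ∂μ, -Real.log (μ.real {a}) - -Real.log (q a) ≤ q a / μ.real {a} - 1 := by
    filter_upwards [hac, ae_measureReal_singleton_ne_zero μ] with a hqa hμa
    rw [neg_sub_neg, ← Real.log_div hqa hμa]
    exact Real.log_le_sub_one_of_pos
      (div_pos ((hq a).lt_of_ne' hqa) (measureReal_nonneg.lt_of_ne' hμa))
  have hmass : ∫ a, q a / μ.real {a} ∂μ ≤ 1 := by
    rw [integral_fintype .of_finite]
    refine (Finset.sum_le_sum fun a _ ↦ ?_).trans hsum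
    by_cases hμa : μ.real {a} = 0
    · simpa only [hμa, zero_smul] using hq a
    · rw [smul_eq_mul, mul_div_cancel₀ _ hμa]
  have hint := integral_mono_ae .of_finite .of_finite hgap
  rw [integral_sub .of_finite .of_finite, integral_sub .of_finite .of_finite] at hint
  simp only [integral_const, probReal_univ, smul_eq_mul, mul_one] at hint
  unfold shannonEntropy
  linarith

theorem shannonEntropy_le_log_card [Fintype α] (μ : Measure α) [IsProbabilityMeasure μ] :
    shannonEntropy μ ≤ Real.log (Fintype.card α) := by
  have : Nonempty α := nonempty_of_isProbabilityMeasure μ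
  have hcard : (Fintype.card α : ℝ) ≠ 0 := Nat.cast_ne_zero.2 Fintype.card_ne_zero
  simpa using shannonEntropy_le_integral_neg_log μ (q := fun _ ↦ (Fintype.card α : ℝ)⁻¹)
    (fun _ ↦ by positivity) (by simp [hcard]) (.of_forall fun _ ↦ inv_ne_zero hcard)

theorem shannonEntropy_map_eq_integral [Finite α] (μ : Measure Ω) {X : Ω → α}
    (hX : Measurable X) :
    shannonEntropy (μ.map X) = ∫ x, -Real.log (μ.real (X ⁻¹' {X x})) ∂μ := by
  rw [shannonEntropy, integral_map hX.aemeasurable AEStronglyMeasurable.of_discrete]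
  simp only [map_measureReal_apply hX (measurableSet_singleton _)]

theorem shannonEntropy_map_le [Finite α] [Finite β] (μ : Measure α) [IsProbabilityMeasure μ]
    (f : α → β) : shannonEntropy (μ.map f) ≤ shannonEntropy μ := by
  rw [shannonEntropy_map_eq_integral μ (measurable_of_finite f)]
  refine integral_mono_ae .of_finite .of_finite ?_
  filter_upwards [ae_measureReal_singleton_ne_zero μ] with a ha
  exact neg_le_neg (Real.log_le_log (measureReal_nonneg.lt_of_ne' ha)
    (measureReal_mono (singleton_subset_iff.2 rfl)))

-- `κ t` stands in for the conditional law of the second coordinate given that the first is `t`: the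
-- bound is the chain rule with the conditional entropy replaced by a cross entropy.
theorem shannonEntropy_snd_le_fst_add_integral [Finite τ] [Fintype β] (μ : Measure (τ × β))
    [IsProbabilityMeasure μ] {κ : τ → β → ℝ} (hκ : ∀ t b, 0 ≤ κ t b)
    (hsum : ∀ t, ∑ b, κ t b ≤ 1) (hac : ∀ᵐ p ∂μ, κ p.1 p.2 ≠ 0) :
    shannonEntropy μ.snd ≤ shannonEntropy μ.fst + ∫ p, -Real.log (κ p.1 p.2) ∂μ := by
  have := Fintype.ofFinite τ
  have hfst : ∀ᵐ p ∂μ, μ.fst.real {p.1} ≠ 0 :=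
    ae_of_ae_map measurable_fst.aemeasurable (ae_measureReal_singleton_ne_zero μ.fst)
  have hmass : ∑ p : τ × β, μ.fst.real {p.1} * κ p.1 p.2 ≤ 1 := by
    simp only [Fintype.sum_prod_type, ← Finset.mul_sum]
    calc ∑ t, μ.fst.real {t} * ∑ b, κ t b
        ≤ ∑ t, μ.fst.real {t} := Finset.sum_le_sum fun t _ ↦
          mul_le_of_le_one_right measureReal_nonneg (hsum t)
      _ = 1 := by simp
  calc shannonEntropy μ.snd
      ≤ shannonEntropy μ := shannonEntropy_map_le μ Prod.snd
    _ ≤ ∫ p, -Real.log (μ.fst.real {p.1} * κ p.1 p.2) ∂μ := by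
        refine shannonEntropy_le_integral_neg_log μ
          (fun p ↦ mul_nonneg measureReal_nonneg (hκ _ _)) hmass ?_
        filter_upwards [hfst, hac] with p h₁ h₂ using mul_ne_zero h₁ h₂
    _ = ∫ p, (-Real.log (μ.fst.real {p.1}) + -Real.log (κ p.1 p.2)) ∂μ := by
        refine integral_congr_ae ?_
        filter_upwards [hfst, hac] with p h₁ h₂
        rw [Real.log_mul h₁ h₂, neg_add]
    _ = (∫ p, -Real.log (μ.fst.real {p.1}) ∂μ) + ∫ p, -Real.log (κ p.1 p.2) ∂μ :=
        integral_add .of_finite .of_finite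
    _ = shannonEntropy μ.fst + ∫ p, -Real.log (κ p.1 p.2) ∂μ := by
        rw [shannonEntropy, Measure.fst,
          integral_map measurable_fst.aemeasurable AEStronglyMeasurable.of_discrete]

theorem shannonEntropy_map_pi_le_add_sum_integral {S : Type*} [Fintype S] [Finite τ] [Fintype β]
    (μ : Measure Ω) [IsProbabilityMeasure μ] {U : Ω → τ} (hU : Measurable U)
    {X : Ω → S → β} (hX : Measurable X) {κ : S → τ → β → ℝ} (hκ : ∀ s t b, 0 ≤ κ s t b)
    (hsum : ∀ s t, ∑ b, κ s t b ≤ 1) (hac : ∀ s, ∀ᵐ x ∂μ, κ s (U x) (X x s) ≠ 0) :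
    shannonEntropy (μ.map X)
      ≤ shannonEntropy (μ.map U) + ∑ s, ∫ x, -Real.log (κ s (U x) (X x s)) ∂μ := by
  have hUX := hU.prodMk hX
  have := Measure.isProbabilityMeasure_map (μ := μ) hUX.aemeasurable
  have hac' : ∀ᵐ x ∂μ, ∀ s, κ s (U x) (X x s) ≠ 0 := ae_all_iff.2 hac
  have hmass (t : τ) : ∑ b : S → β, ∏ s, κ s t (b s) ≤ 1 := by
    rw [← Fintype.prod_sum fun s b ↦ κ s t b]
    exact Finset.prod_le_one (fun s _ ↦ Finset.sum_nonneg fun b _ ↦ hκ s t b) fun s _ ↦ hsum s t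
  have hchain := shannonEntropy_snd_le_fst_add_integral (μ.map fun x ↦ (U x, X x))
    (fun t b ↦ Finset.prod_nonneg fun s _ ↦ hκ s t (b s)) hmass (by
      rw [ae_map_iff hUX.aemeasurable (Set.toFinite _).measurableSet]
      filter_upwards [hac'] with x hx using Finset.prod_ne_zero_iff.2 fun s _ ↦ hx s)
  rw [Measure.fst_map_prodMk hX, Measure.snd_map_prodMk hU,
    integral_map hUX.aemeasurable AEStronglyMeasurable.of_discrete] at hchain
  refine hchain.trans_eq (congrArg _ ?_)
  calc ∫ x, -Real.log (∏ s, κ s (U x) (X x s)) ∂μ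
      = ∫ x, ∑ s, -Real.log (κ s (U x) (X x s)) ∂μ := by
        refine integral_congr_ae ?_
        filter_upwards [hac'] with x hx
        rw [Real.log_prod fun s _ ↦ hx s, Finset.sum_neg_distrib]
    _ = ∑ s, ∫ x, -Real.log (κ s (U x) (X x s)) ∂μ :=
        integral_finsetSum _ fun s _ ↦ Integrable.comp_measurable (f := fun x ↦ (U x, X x))
          (g := fun p ↦ -Real.log (κ s p.1 (p.2 s))) .of_finite hUX

theorem shannonEntropy_pi_le {ι : Type*} [Fintype ι] [Finite α] (μ : Measure (ι → α))
    [IsProbabilityMeasure μ] :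
    shannonEntropy μ ≤ ∑ i, shannonEntropy (μ.map fun a ↦ a i) := by
  have := Fintype.ofFinite α
  have hmarg (i : ι) : IsProbabilityMeasure (μ.map fun a ↦ a i) :=
    Measure.isProbabilityMeasure_map (measurable_pi_apply i).aemeasurable
  have hchain := shannonEntropy_map_pi_le_add_sum_integral μ (U := fun _ ↦ ()) measurable_const
    measurable_id (κ := fun i _ b ↦ (μ.map fun a ↦ a i).real {b})
    (fun _ _ _ ↦ measureReal_nonneg) (fun i _ ↦ by simp)
    fun i ↦ ae_of_ae_map (measurable_pi_apply i).aemeasurable (ae_measureReal_singleton_ne_zero _)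
  have htrivial : shannonEntropy (μ.map fun _ ↦ ()) = 0 := by
    rw [shannonEntropy_map_eq_integral μ measurable_const]; simp
  rw [Measure.map_id, htrivial, zero_add] at hchain
  refine hchain.trans_eq (Finset.sum_congr rfl fun i _ ↦ ?_)
  rw [shannonEntropy, integral_map (measurable_pi_apply i).aemeasurable
    AEStronglyMeasurable.of_discrete]
  rfl

end Entropy

section Fano

/-- The subprobability weight of the outcome `b` after the guess `g`, when guesses are trusted up to
probability `e` and the error is spread uniformly over the other outcomes; the weight with which
Fano's inequality compares a conditional law. -/
noncomputable def fanoWeight {β : Type*} [Fintype β] (e : ℝ) (g b : β) : ℝ :=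
  if b = g then 1 - e else e / ((Fintype.card β : ℝ) - 1)

variable {β : Type*} [Fintype β]

theorem fanoWeight_nonneg {e : ℝ} (h0 : 0 ≤ e) (h1 : e ≤ 1) (g b : β) : 0 ≤ fanoWeight e g b := by
  have hcard : (1 : ℝ) ≤ Fintype.card β :=
    Nat.one_le_cast.2 (Fintype.card_pos_iff.2 ⟨g⟩)
  unfold fanoWeight
  split_ifs
  · linarith
  · exact div_nonneg h0 (by linarith)

theorem sum_fanoWeight_le_one {e : ℝ} (h0 : 0 ≤ e) (g : β) : ∑ b, fanoWeight e g b ≤ 1 := by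
  have hcard : ((Finset.univ.erase g).card : ℝ) = Fintype.card β - 1 := by
    rw [Finset.cast_card_erase_of_mem (Finset.mem_univ g), Finset.card_univ]
  have herr : ∑ b ∈ Finset.univ.erase g, fanoWeight e g b
      = (Fintype.card β - 1) * (e / ((Fintype.card β : ℝ) - 1)) := by
    rw [← hcard, ← nsmul_eq_mul]
    refine Finset.sum_eq_card_nsmul fun b hb ↦ ?_
    rw [fanoWeight, if_neg (Finset.ne_of_mem_erase hb), hcard]
  rw [← Finset.add_sum_erase _ _ (Finset.mem_univ g), herr, fanoWeight, if_pos rfl,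
    mul_div_left_comm]
  linarith [mul_le_of_le_one_right h0 (div_self_le_one ((Fintype.card β : ℝ) - 1))]

variable {Ω τ : Type*} [MeasurableSpace Ω] [MeasurableSpace τ] [MeasurableSpace β]
  [MeasurableSingletonClass β] [MeasurableSingletonClass τ]

theorem ae_fanoWeight_ne_zero (μ : Measure Ω) [IsProbabilityMeasure μ] {X g : Ω → β}
    (hX : Measurable X) (hg : Measurable g) :
    ∀ᵐ x ∂μ, fanoWeight (μ.real {x | X x ≠ g x}) (g x) (X x) ≠ 0 := by
  set e := μ.real {x | X x ≠ g x}
  have hhit : ∀ᵐ x ∂μ, 1 - e = 0 → X x ≠ g x := by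
    have hcompl : e = 1 - μ.real {x | X x = g x} :=
      probReal_compl_eq_one_sub (measurableSet_eq_fun hX hg)
    refine Filter.eventually_imp_distrib_left.2 fun h ↦ compl_mem_ae_iff.2 ?_
    rwa [hcompl, sub_sub_cancel, measureReal_eq_zero_iff] at h
  have hmiss : ∀ᵐ x ∂μ, e = 0 → X x = g x :=
    Filter.eventually_imp_distrib_left.2 fun h ↦ (measureReal_eq_zero_iff).1 h
  filter_upwards [hhit, hmiss] with x h₁ h₂
  rw [fanoWeight]
  split_ifs with h
  · exact fun h' ↦ h₁ h' h
  · have : 1 < Fintype.card β := Fintype.one_lt_card_iff.2 ⟨_, _, h⟩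
    exact div_ne_zero (mt h₂ h) (sub_pos.2 (Nat.one_lt_cast.2 this)).ne'

theorem integral_neg_log_fanoWeight (μ : Measure Ω) [IsProbabilityMeasure μ] {X g : Ω → β}
    (hX : Measurable X) (hg : Measurable g) :
    ∫ x, -Real.log (fanoWeight (μ.real {x | X x ≠ g x}) (g x) (X x)) ∂μ
      = Real.qaryEntropy (Fintype.card β) (μ.real {x | X x ≠ g x}) := by
  set e := μ.real {x | X x ≠ g x} with he
  have hmeas : MeasurableSet {x | X x ≠ g x} := (measurableSet_eq_fun hX hg).compl
  have hsplit : ∀ x, -Real.log (fanoWeight e (g x) (X x))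
      = ({x | X x ≠ g x}ᶜ.indicator (fun _ ↦ -Real.log (1 - e)) x
        + {x | X x ≠ g x}.indicator (fun _ ↦ -Real.log (e / (Fintype.card β - 1))) x) := by
    intro x
    by_cases hx : X x = g x <;> simp [fanoWeight, hx]
  simp only [hsplit]
  rw [integral_add ((integrable_const _).indicator hmeas.compl)
    ((integrable_const _).indicator hmeas), integral_indicator_const _ hmeas,
    integral_indicator_const _ hmeas.compl, probReal_compl_eq_one_sub hmeas, ← he]
  rcases eq_or_ne e 0 with h0 | h0
  · simp [h0]
  · obtain ⟨x, hx⟩ := nonempty_of_measureReal_ne_zero h0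
    have hcard : (Fintype.card β : ℝ) - 1 ≠ 0 :=
      (sub_pos.2 (Nat.one_lt_cast.2 (Fintype.one_lt_card_iff.2 ⟨_, _, hx⟩))).ne'
    rw [Real.qaryEntropy, Real.binEntropy, Real.log_div h0 hcard]
    push_cast
    simp only [smul_eq_mul, Real.log_inv]
    ring

theorem shannonEntropy_map_pi_le_add_sum_qaryEntropy {S : Type*} [Fintype S] [Finite τ]
    (μ : Measure Ω) [IsProbabilityMeasure μ] {U : Ω → τ} (hU : Measurable U)
    {X : Ω → S → β} (hX : Measurable X) (g : S → τ → β) :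
    shannonEntropy (μ.map X) ≤ shannonEntropy (μ.map U)
      + ∑ s, Real.qaryEntropy (Fintype.card β) (μ.real {x | X x s ≠ g s (U x)}) := by
  have hXs (s : S) : Measurable fun x ↦ X x s := (measurable_pi_apply s).comp hX
  have hgU (s : S) : Measurable fun x ↦ g s (U x) := (measurable_of_finite (g s)).comp hU
  refine (shannonEntropy_map_pi_le_add_sum_integral μ hU hX
    (κ := fun s t b ↦ fanoWeight (μ.real {x | X x s ≠ g s (U x)}) (g s t) b)
    (fun s t b ↦ fanoWeight_nonneg measureReal_nonneg measureReal_le_one _ _)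
    (fun s t ↦ sum_fanoWeight_le_one measureReal_nonneg _)
    (fun s ↦ ae_fanoWeight_ne_zero μ (hXs s) (hgU s))).trans_eq ?_
  simp only [integral_neg_log_fanoWeight μ (hXs _) (hgU _)]

end Fano

section RelativelyIndependentPower

variable {Z Z' α β : Type*} [MeasurableSpace Z] [MeasurableSpace Z'] [MeasurableSpace α]
  [MeasurableSpace β]

theorem measurable_measure_pi {ι : Type*} [Fintype ι] {κ : Z → Measure α}
    [∀ z, IsProbabilityMeasure (κ z)] (hκ : Measurable κ) :
    Measurable fun z ↦ Measure.pi fun _ : ι ↦ κ z := by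
  refine Measurable.measure_of_isPiSystem_of_isProbabilityMeasure generateFrom_pi.symm
    isPiSystem_pi ?_
  rintro _ ⟨t, ht, rfl⟩
  simp only [Measure.pi_pi]
  exact Finset.measurable_fun_prod _ fun i _ ↦
    (Measure.measurable_coe (ht i (mem_univ i))).comp hκ

theorem compProd_map_prodMap (m : Measure Z) [SFinite m] (κ : Kernel Z α) [IsSFiniteKernel κ]
    (e : Z ≃ᵐ Z') {f : α → β} (hf : Measurable f) :
    (m ⊗ₘ κ).map (Prod.map e f) = m.map e ⊗ₘ (κ.comap e.symm e.symm.measurable).map f := by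
  have hef : Measurable (Prod.map e f) := e.measurable.prodMap hf
  ext s hs
  rw [Measure.map_apply hef hs, Measure.compProd_apply (hef hs), Measure.compProd_apply hs,
    lintegral_map_equiv]
  refine lintegral_congr fun z ↦ ?_
  rw [Kernel.map_apply' _ hf _ (measurable_prodMk_left hs), Kernel.comap_apply,
    e.symm_apply_apply]
  rfl

/-- The kernel sending `z` to the law of a family of independent samples of `κ z` indexed
by `ι`. -/
noncomputable def iidKernel (ι : Type*) [Fintype ι] (κ : Kernel Z α) [IsMarkovKernel κ] :
    Kernel Z (ι → α) where
  toFun z := Measure.pi fun _ ↦ κ z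
  measurable' := measurable_measure_pi κ.measurable

section

variable {ι : Type*} [Fintype ι] (κ : Kernel Z α) [IsMarkovKernel κ]

theorem iidKernel_apply (z : Z) : iidKernel ι κ z = Measure.pi fun _ ↦ κ z := rfl

instance : IsMarkovKernel (iidKernel ι κ) where
  isProbabilityMeasure z := by rw [iidKernel_apply]; infer_instance

theorem iidKernel_map_eval (i : ι) : (iidKernel ι κ).map (fun u ↦ u i) = κ := by
  ext1 z
  rw [Kernel.map_apply _ (measurable_pi_apply i), iidKernel_apply]
  exact (measurePreserving_eval (fun _ ↦ κ z) i).map_eq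

end

variable [StandardBorelSpace α] [Nonempty α]

/-- The relatively independent self-joining over `Z` of a law on `Z × α`: a base point
together with a family of samples of its fibre, indexed by `ι` and conditionally independent given
the base point. -/
noncomputable def relIndepPower (ι : Type*) [Fintype ι] (μ : Measure (Z × α))
    [IsFiniteMeasure μ] : Measure (Z × (ι → α)) :=
  μ.fst ⊗ₘ iidKernel ι μ.condKernel

section

variable {ι : Type*} [Fintype ι] (μ : Measure (Z × α))

instance [IsProbabilityMeasure μ] : IsProbabilityMeasure (relIndepPower ι μ) := by
  unfold relIndepPower; infer_instance

variable [IsFiniteMeasure μ]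

theorem relIndepPower_map_fst : (relIndepPower ι μ).map Prod.fst = μ.fst :=
  Measure.fst_compProd _ _

theorem relIndepPower_map_eval (i : ι) :
    (relIndepPower ι μ).map (Prod.map id fun u ↦ u i) = μ := by
  rw [relIndepPower, ← Measure.compProd_map (measurable_pi_apply i), iidKernel_map_eval,
    Measure.disintegrate]

variable [StandardBorelSpace β] [Nonempty β]

-- `e` is invertible, so conditioning on `e z` is the same as conditioning on `z`.
theorem relIndepPower_map_prodMap {μ' : Measure (Z' × β)} [IsFiniteMeasure μ'] (e : Z ≃ᵐ Z')
    {f : α → β} (hf : Measurable f) (hμ : μ.map (Prod.map e f) = μ') :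
    (relIndepPower ι μ).map (Prod.map e fun u i ↦ f (u i)) = relIndepPower ι μ' := by
  subst hμ
  have hfst : (μ.map (Prod.map e f)).fst = μ.fst.map e := by
    rw [Measure.fst, Measure.fst, Measure.map_map measurable_fst (e.measurable.prodMap hf),
      Measure.map_map e.measurable measurable_fst]
    rfl
  set κ := (μ.condKernel.comap e.symm e.symm.measurable).map f with hκ
  have : IsMarkovKernel κ := Kernel.IsMarkovKernel.map _ hf
  have hcond : ∀ᵐ z ∂μ.fst.map e, κ z = (μ.map (Prod.map e f)).condKernel z := by
    rw [← hfst]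
    refine eq_condKernel_of_measure_eq_compProd κ ?_
    rw [hfst, hκ, ← compProd_map_prodMap, Measure.disintegrate]
    exact hf
  have hiid : ((iidKernel ι μ.condKernel).comap e.symm e.symm.measurable).map
      (fun u i ↦ f (u i)) = iidKernel ι κ := by
    ext1 z
    rw [Kernel.map_apply _ (by fun_prop), Kernel.comap_apply, iidKernel_apply, iidKernel_apply,
      Measure.pi_map_pi fun _ ↦ hf.aemeasurable]
    simp only [hκ, Kernel.map_apply _ hf, Kernel.comap_apply]
  rw [relIndepPower, compProd_map_prodMap _ _ _ (by fun_prop), hiid, relIndepPower, hfst]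
  refine Measure.compProd_congr ?_
  filter_upwards [hcond] with z hz
  rw [iidKernel_apply, iidKernel_apply, hz]

end

end RelativelyIndependentPower

section EmpiricalFrequency

variable {α ι : Type*} [Fintype ι] {S : Set α}

/-- The proportion of the samples `u i` that fall in `S`. -/
noncomputable def empiricalFreq (S : Set α) (u : ι → α) : ℝ :=
  (Fintype.card ι : ℝ)⁻¹ * ∑ i, S.indicator 1 (u i)

theorem empiricalFreq_mem_Icc (S : Set α) (u : ι → α) : empiricalFreq S u ∈ Icc 0 1 := by
  have hcard : ∑ i, S.indicator (1 : α → ℝ) (u i) ≤ Fintype.card ι := by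
    simpa using Finset.sum_le_card_nsmul Finset.univ (fun i ↦ S.indicator (1 : α → ℝ) (u i)) 1
      fun i _ ↦ indicator_apply_le' (fun _ ↦ le_rfl) fun _ ↦ zero_le_one' ℝ
  exact ⟨mul_nonneg (by positivity) (Finset.sum_nonneg fun i _ ↦
    indicator_nonneg (fun _ _ ↦ zero_le_one' ℝ) _),
    inv_mul_le_one_of_le₀ hcard (by positivity)⟩

variable [MeasurableSpace α]

theorem measurable_empiricalFreq (hS : MeasurableSet S) :
    Measurable (empiricalFreq S : (ι → α) → ℝ) :=
  (Finset.measurable_fun_sum _ fun i _ ↦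
    (measurable_one.indicator hS).comp (measurable_pi_apply i)).const_mul _

variable [Nonempty ι] (m : Measure α) [IsProbabilityMeasure m]

theorem integral_empiricalFreq (hS : MeasurableSet S) :
    ∫ u, empiricalFreq S u ∂(Measure.pi fun _ : ι ↦ m) = m.real S := by
  have hterm (i : ι) : ∫ u, S.indicator (1 : α → ℝ) (u i) ∂(Measure.pi fun _ : ι ↦ m)
      = m.real S := by
    rw [integral_comp_eval (μ := fun _ ↦ m) (by fun_prop), integral_indicator_one hS]
  have hint (i : ι) : Integrable (fun u ↦ S.indicator (1 : α → ℝ) (u i))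
      (Measure.pi fun _ : ι ↦ m) :=
    integrable_comp_eval (μ := fun _ ↦ m) ((integrable_const 1).indicator hS)
  simp only [empiricalFreq, integral_const_mul, integral_finsetSum _ fun i _ ↦ hint i, hterm]
  simp

theorem variance_empiricalFreq_le (hS : MeasurableSet S) :
    Var[empiricalFreq S; Measure.pi fun _ : ι ↦ m] ≤ 1 / (4 * Fintype.card ι) := by
  have hvar : Var[S.indicator (1 : α → ℝ); m] ≤ 1 / 4 := by
    refine (variance_le_sq_of_bounded (a := 0) (b := 1) (.of_forall fun a ↦ ?_)
      (measurable_one.indicator hS).aemeasurable).trans (by norm_num)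
    by_cases ha : a ∈ S <;> simp [ha]
  have hsum : Var[fun u ↦ ∑ i, S.indicator (1 : α → ℝ) (u i); Measure.pi fun _ : ι ↦ m]
      = Fintype.card ι * Var[S.indicator (1 : α → ℝ); m] := by
    have := variance_sum_pi (μ := fun _ : ι ↦ m) (X := fun _ ↦ S.indicator (1 : α → ℝ))
      fun _ ↦ (memLp_const 1).indicator hS
    rw [Finset.sum_const, Finset.card_univ, nsmul_eq_mul] at this
    rw [← this]
    congr 1
    ext u
    simp
  unfold empiricalFreq
  rw [variance_const_mul, hsum]
  calc (Fintype.card ι : ℝ)⁻¹ ^ 2 * (Fintype.card ι * Var[S.indicator (1 : α → ℝ); m])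
      ≤ (Fintype.card ι : ℝ)⁻¹ ^ 2 * (Fintype.card ι * (1 / 4) : ℝ) := by gcongr
    _ = 1 / (4 * Fintype.card ι : ℝ) := by field_simp

theorem measure_pi_empiricalFreq_deviation_le (hS : MeasurableSet S) {τ : ℝ} (hτ : 0 < τ) :
    (Measure.pi fun _ : ι ↦ m) {u | τ ≤ |empiricalFreq S u - m.real S|}
      ≤ ENNReal.ofReal (1 / (4 * Fintype.card ι * τ ^ 2)) := by
  have hmem : MemLp (empiricalFreq S) 2 (Measure.pi fun _ : ι ↦ m) :=
    memLp_of_bounded (.of_forall (empiricalFreq_mem_Icc S))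
      (measurable_empiricalFreq hS).aestronglyMeasurable 2
  have hcheb := meas_ge_le_variance_div_sq hmem hτ
  rw [integral_empiricalFreq m hS] at hcheb
  refine hcheb.trans (ENNReal.ofReal_le_ofReal ?_)
  rw [← div_div]
  gcongr
  exact variance_empiricalFreq_le m hS

end EmpiricalFrequency

section ThresholdGuess

theorem abs_sub_le_or_le_abs_sub_of_not_iff {a b c τ : ℝ} (h : ¬(c < a ↔ c < b)) :
    |a - c| ≤ τ ∨ τ ≤ |b - a| := by
  by_contra! ⟨hfar, hclose⟩
  obtain ⟨hlo, hhi⟩ := abs_lt.1 hclose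
  rcases lt_abs.1 hfar with hfar | hfar
  · exact h (iff_of_true (by linarith) (by linarith))
  · exact h (iff_of_false (by linarith) (by linarith))

theorem exists_pos_measureReal_abs_sub_le_lt {Z : Type*} [MeasurableSpace Z] (ω : Measure Z)
    [IsFiniteMeasure ω] {φ : Z → ℝ} (hφ : Measurable φ) {c : ℝ} (hc : ω {z | φ z = c} = 0)
    {ε : ℝ} (hε : 0 < ε) : ∃ τ, 0 < τ ∧ ω.real {z | |φ z - c| ≤ τ} < ε := by
  have hlim : Filter.Tendsto (fun r ↦ ω.map φ (Metric.cthickening r {c})) (nhds 0)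
      (nhds (ω.map φ {c})) :=
    tendsto_measure_cthickening_of_isClosed ⟨1, one_pos, measure_ne_top _ _⟩ isClosed_singleton
  rw [Measure.map_apply hφ (measurableSet_singleton c)] at hlim
  have hzero : ω (φ ⁻¹' {c}) < ENNReal.ofReal ε :=
    hc.trans_lt (ENNReal.ofReal_pos.2 hε)
  have hsmall : ∀ᶠ r in nhdsWithin (0 : ℝ) (Ioi 0),
      ω.map φ (Metric.cthickening r {c}) < ENNReal.ofReal ε :=
    (hlim.eventually_lt_const hzero).filter_mono nhdsWithin_le_nhds
  obtain ⟨τ, hτε, hτ⟩ := (hsmall.and self_mem_nhdsWithin).exists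
  refine ⟨τ, hτ, ?_⟩
  rw [Metric.cthickening_singleton _ (le_of_lt hτ),
    Measure.map_apply hφ Metric.isClosed_closedBall.measurableSet] at hτε
  exact (ENNReal.toReal_lt_of_lt_ofReal hτε :)

variable {Z α : Type*} [MeasurableSpace Z] [MeasurableSpace α] [StandardBorelSpace α] [Nonempty α]
  (μ : Measure (Z × α)) [IsProbabilityMeasure μ] {S : Set α}

theorem measureReal_relIndepPower_deviation_le (hS : MeasurableSet S) {ι : Type*} [Fintype ι]
    [Nonempty ι] {τ : ℝ} (hτ : 0 < τ) :
    (relIndepPower ι μ).real {x | τ ≤ |empiricalFreq S x.2 - (μ.condKernel x.1).real S|}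
      ≤ 1 / (4 * Fintype.card ι * τ ^ 2) := by
  have hmeas : MeasurableSet
      {x : Z × (ι → α) | τ ≤ |empiricalFreq S x.2 - (μ.condKernel x.1).real S|} :=
    measurableSet_le measurable_const (((measurable_empiricalFreq hS).comp measurable_snd).sub
      ((μ.condKernel.measurable_coe hS).ennreal_toReal.comp measurable_fst)).abs
  refine ENNReal.toReal_le_of_le_ofReal (by positivity) ?_
  rw [relIndepPower, Measure.compProd_apply hmeas]
  calc ∫⁻ z, iidKernel ι μ.condKernel z
        (Prod.mk z ⁻¹' {x | τ ≤ |empiricalFreq S x.2 - (μ.condKernel x.1).real S|}) ∂μ.fst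
      ≤ ∫⁻ _, ENNReal.ofReal (1 / (4 * Fintype.card ι * τ ^ 2)) ∂μ.fst :=
        lintegral_mono fun z ↦ measure_pi_empiricalFreq_deviation_le (μ.condKernel z) hS hτ
    _ = ENNReal.ofReal (1 / (4 * Fintype.card ι * τ ^ 2)) := by simp

theorem exists_measureReal_relIndepPower_threshold_lt (hS : MeasurableSet S) {c : ℝ}
    (hc : μ.fst {z | (μ.condKernel z).real S = c} = 0) {ε : ℝ} (hε : 0 < ε) :
    ∃ n : ℕ, (relIndepPower (Fin n) μ).real
      {x | ¬(c < (μ.condKernel x.1).real S ↔ c < empiricalFreq S x.2)} < ε := by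
  obtain ⟨τ, hτ, hnear⟩ := exists_pos_measureReal_abs_sub_le_lt μ.fst
    (μ.condKernel.measurable_coe hS).ennreal_toReal hc (half_pos hε)
  obtain ⟨n, hn⟩ := exists_nat_gt (1 / (2 * τ ^ 2 * ε))
  have hn0 : (0 : ℝ) < n := hn.trans' (by positivity)
  have : NeZero n := ⟨Nat.cast_pos.1 hn0 |>.ne'⟩
  refine ⟨n, ?_⟩
  have hfar : 1 / (4 * Fintype.card (Fin n) * τ ^ 2) < ε / 2 := by
    rw [Fintype.card_fin]
    rw [div_lt_iff₀ (by positivity)] at hn ⊢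
    linarith
  have hband : MeasurableSet {z | |(μ.condKernel z).real S - c| ≤ τ} :=
    measurableSet_le ((μ.condKernel.measurable_coe hS).ennreal_toReal.sub_const c).abs
      measurable_const
  have hsub : {x : Z × (Fin n → α) | ¬(c < (μ.condKernel x.1).real S ↔ c < empiricalFreq S x.2)}
      ⊆ Prod.fst ⁻¹' {z | |(μ.condKernel z).real S - c| ≤ τ}
        ∪ {x | τ ≤ |empiricalFreq S x.2 - (μ.condKernel x.1).real S|} :=
    fun x hx ↦ abs_sub_le_or_le_abs_sub_of_not_iff hx
  have hfst : (relIndepPower (Fin n) μ).real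
      (Prod.fst ⁻¹' {z | |(μ.condKernel z).real S - c| ≤ τ}) < ε / 2 := by
    rwa [← map_measureReal_apply measurable_fst hband, relIndepPower_map_fst]
  calc _ ≤ _ := measureReal_mono hsub
    _ ≤ _ := measureReal_union_le _ _
    _ < ε / 2 + ε / 2 := add_lt_add hfst
        ((measureReal_relIndepPower_deviation_le μ hS hτ).trans_lt hfar)
    _ = ε := add_halves ε

end ThresholdGuess

section InvLimsup

variable {G : Type*} [Group G] {ψ : Finset G → ℝ}

theorem exists_folnerInv_of_invLimsup_lt {M c : ℝ}
    (hM : ∀ F, ψ F / (F.card : ℝ) ≤ M) (h : invLimsup ψ < c) :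
    ∃ (K : Finset G) (δ : ℝ), 0 < δ ∧ ∀ F, FolnerInv K δ F → ψ F / (F.card : ℝ) < c := by
  have : Nonempty {d : ℝ // 0 < d} := ⟨⟨1, one_pos⟩⟩
  obtain ⟨K, hK⟩ := exists_lt_of_ciInf_lt h
  obtain ⟨⟨δ, hδ⟩, hsup⟩ := exists_lt_of_ciInf_lt hK
  have hbdd : BddAbove ((fun F ↦ ψ F / (F.card : ℝ)) '' {F | FolnerInv K δ F}) :=
    ⟨M, forall_mem_image.2 fun F _ ↦ hM F⟩
  exact ⟨K, δ, hδ, fun F hF ↦ (le_csSup hbdd (mem_image_of_mem _ hF)).trans_lt hsup⟩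

theorem sSup_folnerInv_nonneg (hψ : ∀ F, 0 ≤ ψ F) (K : Finset G) (δ : ℝ) :
    0 ≤ sSup ((fun F ↦ ψ F / (F.card : ℝ)) '' {F | FolnerInv K δ F}) :=
  Real.sSup_nonneg (forall_mem_image.2 fun F _ ↦ div_nonneg (hψ F) (Nat.cast_nonneg _))

theorem invLimsup_nonneg (hψ : ∀ F, 0 ≤ ψ F) : 0 ≤ invLimsup ψ :=
  Real.iInf_nonneg fun K ↦ Real.iInf_nonneg fun δ ↦ sSup_folnerInv_nonneg hψ K δ.1

theorem invLimsup_le (hψ : ∀ F, 0 ≤ ψ F) {c : ℝ} (hc : 0 ≤ c) (K : Finset G) {δ : ℝ} (hδ : 0 < δ)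
    (h : ∀ F, FolnerInv K δ F → ψ F / (F.card : ℝ) ≤ c) : invLimsup ψ ≤ c := by
  have hK : BddBelow (range fun K ↦ ⨅ δ : {d : ℝ // 0 < d},
      sSup ((fun F ↦ ψ F / (F.card : ℝ)) '' {F | FolnerInv K δ.1 F})) :=
    ⟨0, forall_mem_range.2 fun K ↦ Real.iInf_nonneg fun δ ↦ sSup_folnerInv_nonneg hψ K δ.1⟩
  have hδK : BddBelow (range fun δ : {d : ℝ // 0 < d} ↦
      sSup ((fun F ↦ ψ F / (F.card : ℝ)) '' {F | FolnerInv K δ.1 F})) :=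
    ⟨0, forall_mem_range.2 fun δ ↦ sSup_folnerInv_nonneg hψ K δ.1⟩
  exact (ciInf_le hK K).trans ((ciInf_le hδK ⟨δ, hδ⟩).trans
    (Real.sSup_le (forall_mem_image.2 h) hc))

end InvLimsup

section Dynamics

variable {G X Y Z α β : Type*} [Group G] [MulAction G X] [MulAction G Y] [MulAction G Z]

/-- The word read by the observable `p` along the orbit segment `F • x`; its level sets are the
atoms of the join over `s ∈ F` of the translates by `s⁻¹` of the level set partition of `p`. -/
def itinerary (p : X → α) (F : Finset G) (x : X) : ↥F → α := fun s ↦ p ((s : G) • x)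

variable [MeasurableSpace X] [MeasurableSpace Y] [MeasurableSpace Z]

theorem isMeasPartition_fibers {k : ℕ} {p : X → Fin k} (hp : Measurable p) :
    IsMeasPartition fun i ↦ p ⁻¹' {i} :=
  ⟨fun i ↦ hp (measurableSet_singleton i),
    fun _ _ hij ↦ (disjoint_singleton.2 hij).preimage p, by
      rw [← preimage_iUnion, iUnion_of_singleton, preimage_univ]⟩

variable [MeasurableSpace α] [MeasurableSpace β]

theorem measurable_itinerary [MeasurableConstSMul G X] {p : X → α} (hp : Measurable p)
    (F : Finset G) : Measurable (itinerary p F) :=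
  measurable_pi_lambda _ fun s ↦ hp.comp (measurable_const_smul (s : G))

section HJoin

variable [MeasurableConstSMul G X] (μ : Measure X) [IsProbabilityMeasure μ] {k : ℕ} {p : X → Fin k}

theorem hJoin_fibers (hp : Measurable p) (F : Finset G) :
    HJoin μ (fun i ↦ p ⁻¹' {i}) F = shannonEntropy (μ.map (itinerary p F)) := by
  have := Measure.isProbabilityMeasure_map (μ := μ) (measurable_itinerary hp F).aemeasurable
  rw [shannonEntropy_eq_sum_negMulLog, HJoin]
  refine Finset.sum_congr rfl fun a _ ↦ ?_
  rw [map_measureReal_apply (measurable_itinerary hp F) (measurableSet_singleton a),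
    measureReal_def]
  congr 3
  ext x
  simp [itinerary, funext_iff]

theorem hJoin_fibers_nonneg (hp : Measurable p) (F : Finset G) :
    0 ≤ HJoin μ (fun i ↦ p ⁻¹' {i}) F := by
  have := Measure.isProbabilityMeasure_map (μ := μ) (measurable_itinerary hp F).aemeasurable
  rw [hJoin_fibers μ hp]
  exact shannonEntropy_nonneg _

theorem hJoin_fibers_le (hp : Measurable p) (F : Finset G) :
    HJoin μ (fun i ↦ p ⁻¹' {i}) F ≤ F.card * Real.log k := by
  have := Measure.isProbabilityMeasure_map (μ := μ) (measurable_itinerary hp F).aemeasurable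
  rw [hJoin_fibers μ hp]
  simpa using shannonEntropy_le_log_card (μ.map (itinerary p F))

end HJoin

/-- The joint law of the `Z`-coordinate and of the observable `p` of the `Y`-coordinate, for a law
`ρ` on `Y × Z`. -/
noncomputable def observedLaw (p : Y → α) (ρ : Measure (Y × Z)) : Measure (Z × α) :=
  ρ.map fun x ↦ (x.2, p x.1)

section ObservedLaw

instance (ρ : Measure (Y × Z)) [IsFiniteMeasure ρ] (p : Y → α) :
    IsFiniteMeasure (observedLaw p ρ) := by
  unfold observedLaw; infer_instance

variable (ρ : Measure (Y × Z)) {p : Y → α}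

theorem isProbabilityMeasure_observedLaw (hp : Measurable p) [IsProbabilityMeasure ρ] :
    IsProbabilityMeasure (observedLaw p ρ) :=
  Measure.isProbabilityMeasure_map (by fun_prop)

theorem observedLaw_fst (hp : Measurable p) : (observedLaw p ρ).fst = ρ.snd :=
  Measure.fst_map_prodMk (hp.comp measurable_fst)

theorem observedLaw_snd (hp : Measurable p) : (observedLaw p ρ).snd = ρ.fst.map p := by
  rw [observedLaw, Measure.snd_map_prodMk measurable_snd, Measure.fst,
    Measure.map_map hp measurable_fst]
  rfl

theorem observedLaw_prod (hp : Measurable p) {S : Set α} {C : Set Z} (hC : MeasurableSet C)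
    (hS : MeasurableSet S) :
    observedLaw p ρ (C ×ˢ S) = ρ ((p ⁻¹' S) ×ˢ C) := by
  rw [observedLaw, Measure.map_apply (by fun_prop) (hC.prod hS)]
  congr 1
  ext x
  exact and_comm

theorem observedLaw_itinerary_map [MeasurableConstSMul G Y] [MeasurableConstSMul G Z]
    (hp : Measurable p) {F : Finset G} (s : ↥F)
    (hρ : MeasurePreserving (fun x : Y × Z ↦ (s : G) • x) ρ ρ) :
    (observedLaw (itinerary p F) ρ).map
        (Prod.map (MeasurableEquiv.smul (s : G)) fun a : ↥F → α ↦ a s) = observedLaw p ρ := by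
  have hpF := measurable_itinerary hp F
  conv_rhs => rw [observedLaw, ← hρ.map_eq, Measure.map_map (by fun_prop) hρ.measurable]
  rw [observedLaw, Measure.map_map (by fun_prop) (by fun_prop)]
  rfl

end ObservedLaw

-- The letter `q (s • z)` is guessed from the letters at `s` of the sampled `p`-words; by invariance
-- of `ρ` the probability of error does not depend on `s`.
theorem shannonEntropy_itinerary_le {ι : Type*} [Fintype ι]
    [MeasurableConstSMul G Y] [MeasurableConstSMul G Z]
    [Finite α] [MeasurableSingletonClass α] [Nonempty α] [Fintype β] [MeasurableSingletonClass β]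
    {ρ : Measure (Y × Z)} [IsProbabilityMeasure ρ]
    (hρ : ∀ s : G, MeasurePreserving (fun x : Y × Z ↦ s • x) ρ ρ)
    {p : Y → α} (hp : Measurable p) {q : Z → β} (hq : Measurable q) (g : (ι → α) → β)
    (F : Finset G) :
    shannonEntropy (ρ.snd.map (itinerary q F))
      ≤ Fintype.card ι * shannonEntropy (ρ.fst.map (itinerary p F))
        + F.card * Real.qaryEntropy (Fintype.card β)
          ((relIndepPower ι (observedLaw p ρ)).real {x | q x.1 ≠ g x.2}) := by
  have hpF := measurable_itinerary hp F
  have hqF := measurable_itinerary hq F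
  have := isProbabilityMeasure_observedLaw ρ hpF
  set Λ := relIndepPower ι (observedLaw (itinerary p F) ρ)
  have := Measure.isProbabilityMeasure_map (μ := Λ) measurable_snd.aemeasurable
  have hfst : Λ.map (fun x ↦ itinerary q F x.1) = ρ.snd.map (itinerary q F) := by
    rw [← observedLaw_fst ρ hpF, ← relIndepPower_map_fst (ι := ι),
      Measure.map_map hqF measurable_fst]
    rfl
  have hsample (i : ι) : (Λ.map Prod.snd).map (fun u ↦ u i) = ρ.fst.map (itinerary p F) := by
    rw [← observedLaw_snd ρ hpF, ← relIndepPower_map_eval (observedLaw (itinerary p F) ρ) i,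
      Measure.snd, Measure.map_map (by fun_prop) (by fun_prop),
      Measure.map_map (by fun_prop) (by fun_prop)]
    rfl
  have herr (s : ↥F) : Λ.real {x | itinerary q F x.1 s ≠ g fun i ↦ x.2 i s}
      = (relIndepPower ι (observedLaw p ρ)).real {x | q x.1 ≠ g x.2} := by
    have hmeas : MeasurableSet {x : Z × (ι → α) | q x.1 ≠ g x.2} :=
      (measurableSet_eq_fun (hq.comp measurable_fst)
        ((measurable_of_finite g).comp measurable_snd)).compl
    rw [← relIndepPower_map_prodMap _ _ (measurable_pi_apply s)
      (observedLaw_itinerary_map ρ hp s (hρ s)),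
      map_measureReal_apply ((MeasurableEquiv.measurable _).prodMap (by fun_prop)) hmeas]
    rfl
  have hsamples : shannonEntropy (Λ.map Prod.snd)
      ≤ Fintype.card ι * shannonEntropy (ρ.fst.map (itinerary p F)) := by
    simpa [hsample] using shannonEntropy_pi_le (Λ.map Prod.snd)
  have hfano := shannonEntropy_map_pi_le_add_sum_qaryEntropy Λ measurable_snd
    (hqF.comp measurable_fst) fun s u ↦ g fun i ↦ u i s
  simp only [Function.comp_def, hfst, herr, Finset.sum_const, Finset.card_univ,
    Fintype.card_coe, nsmul_eq_mul] at hfano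
  exact hfano.trans (by gcongr)

/-- The value of `q` at the `Z`-coordinate can be guessed, with arbitrarily small probability of
error, from finitely many samples that are conditionally independent given the `Z`-coordinate. -/
def IsSamplePredictable (μ : Measure (Z × α)) [IsFiniteMeasure μ] [StandardBorelSpace α]
    [Nonempty α] (q : Z → β) : Prop :=
  ∀ ε > 0, ∃ (n : ℕ) (g : (Fin n → α) → β),
    (relIndepPower (Fin n) μ).real {x | q x.1 ≠ g x.2} < ε

theorem invLimsup_hJoin_eq_zero_of_isSamplePredictable
    [MeasurableConstSMul G Y] [MeasurableConstSMul G Z]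
    {ρ : Measure (Y × Z)} [IsProbabilityMeasure ρ]
    (hρ : ∀ s : G, MeasurePreserving (fun x : Y × Z ↦ s • x) ρ ρ)
    {k l : ℕ} [NeZero k] {p : Y → Fin k} (hp : Measurable p) {q : Z → Fin l} (hq : Measurable q)
    (hzero : invLimsup (fun F : Finset G ↦ HJoin ρ.fst (fun i ↦ p ⁻¹' {i}) F) = 0)
    (hpred : IsSamplePredictable (observedLaw p ρ) q) :
    invLimsup (fun F : Finset G ↦ HJoin ρ.snd (fun i ↦ q ⁻¹' {i}) F) = 0 := by
  refine le_antisymm (le_of_forall_pos_le_add fun ε hε ↦ ?_)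
    (invLimsup_nonneg (hJoin_fibers_nonneg ρ.snd hq))
  have hcont : ∀ᶠ e in nhds 0, Real.qaryEntropy l e < ε / 2 :=
    Real.qaryEntropy_continuous.continuousAt.eventually_lt_const (by simpa using hε)
  obtain ⟨r, hr, hcost⟩ := Metric.eventually_nhds_iff.1 hcont
  obtain ⟨n, g, herr⟩ := hpred r hr
  replace hcost := @hcost ((relIndepPower (Fin n) (observedLaw p ρ)).real {x | q x.1 ≠ g x.2})
    (by rwa [dist_zero_right, Real.norm_of_nonneg measureReal_nonneg])
  obtain ⟨K, δ, hδ, hsmall⟩ := exists_folnerInv_of_invLimsup_lt (c := ε / (2 * (n + 1)))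
    (M := Real.log k) (fun F ↦ div_le_of_le_mul₀ (Nat.cast_nonneg _)
      (Real.log_natCast_nonneg k) ((hJoin_fibers_le ρ.fst hp F).trans_eq (mul_comm _ _)))
    (hzero.trans_lt (by positivity))
  refine invLimsup_le (hJoin_fibers_nonneg ρ.snd hq) (by positivity) K hδ fun F hF ↦ ?_
  have hF0 : (0 : ℝ) < F.card := Nat.cast_pos.2 (Finset.card_pos.2 hF.1)
  have hpF : HJoin ρ.fst (fun i ↦ p ⁻¹' {i}) F < ε / (2 * (n + 1)) * F.card :=
    (div_lt_iff₀ hF0).1 (hsmall F hF)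
  have hqF := shannonEntropy_itinerary_le hρ hp hq g F
  rw [← hJoin_fibers ρ.snd hq, ← hJoin_fibers ρ.fst hp, Fintype.card_fin, Fintype.card_fin] at hqF
  rw [zero_add, div_le_iff₀ hF0]
  calc HJoin ρ.snd (fun i ↦ q ⁻¹' {i}) F
      ≤ n * (ε / (2 * (n + 1)) * F.card) + F.card * (ε / 2) :=
        hqF.trans (by gcongr)
    _ ≤ (ε / 2) * F.card + F.card * (ε / 2) := by
        gcongr ?_ + _
        rw [← mul_assoc]
        gcongr
        rw [← mul_div_assoc, div_le_div_iff₀ (by positivity) two_pos]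
        nlinarith
    _ = ε * F.card := by ring

end Dynamics

section Threshold

theorem ae_eq_const_integral_of_levels_zero_one {Z : Type*} [MeasurableSpace Z] {ω : Measure Z}
    [IsProbabilityMeasure ω] {φ : Z → ℝ} (hφ : Measurable φ) (hint : Integrable φ ω)
    (h01 : ∀ c, ω {z | φ z = c} = 0 → ω {z | c < φ z} = 0 ∨ ω {z | c < φ z} = 1) :
    φ =ᵐ[ω] fun _ ↦ ∫ z, φ z ∂ω := by
  have hlevel {c : ℝ} (hc : ∫ z, φ z ∂ω < c) (hatom : ω {z | φ z = c} = 0) :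
      ∀ᵐ z ∂ω, φ z ≤ c := by
    rcases h01 c hatom with hnull | hfull
    · simpa only [ae_iff, not_le] using hnull
    · have hae : ∀ᵐ z ∂ω, c ≤ φ z :=
        Filter.Eventually.mono
          ((mem_ae_iff_prob_eq_one (measurableSet_lt measurable_const hφ)).2 hfull)
          fun z hz ↦ le_of_lt hz
      have hmean := integral_mono_ae (integrable_const c) hint hae
      rw [integral_const, probReal_univ, one_smul] at hmean
      exact absurd hc hmean.not_gt
  have hdense : Dense {c | 0 < ω {z | φ z = c}}ᶜ :=
    (Measure.countable_meas_level_set_pos hφ).dense_compl ℝ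
  obtain ⟨u, -, hu, hlim⟩ := hdense.exists_seq_strictAnti_tendsto (∫ z, φ z ∂ω)
  have hle : ∀ᵐ z ∂ω, φ z ≤ ∫ z, φ z ∂ω := by
    filter_upwards [ae_all_iff.2 fun n ↦ hlevel (hu n).1 (nonpos_iff_eq_zero.1 (not_lt.1 (hu n).2))]
      with z hz
    exact ge_of_tendsto' hlim hz
  exact (integral_eq_iff_of_ae_le hint (integrable_const _) hle).1 (by simp)

variable {X Y Z α : Type*}

/-- The indicator of `A` with values in `Fin 2`: the observable whose level sets form the partition
`{Aᶜ, A}`. -/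
noncomputable def setLabel (A : Set X) (x : X) : Fin 2 := if x ∈ A then 1 else 0

theorem setLabel_preimage_one (A : Set X) : setLabel A ⁻¹' {1} = A := by
  ext x
  simp [setLabel]

theorem setLabel_eq_setLabel_iff {A : Set X} {B : Set Y} {x : X} {y : Y} :
    setLabel A x = setLabel B y ↔ (x ∈ A ↔ y ∈ B) := by
  by_cases hx : x ∈ A <;> by_cases hy : y ∈ B <;> simp [setLabel, hx, hy]

variable [MeasurableSpace X] [MeasurableSpace Z] [MeasurableSpace α]

theorem measurable_setLabel {A : Set X} (hA : MeasurableSet A) : Measurable (setLabel A) :=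
  Measurable.ite hA measurable_const measurable_const

variable [StandardBorelSpace α] [Nonempty α] {μ : Measure (Z × α)} [IsProbabilityMeasure μ]
  {S : Set α}

theorem isSamplePredictable_setLabel_lt_condKernel (hS : MeasurableSet S) {c : ℝ}
    (hc : μ.fst {z | (μ.condKernel z).real S = c} = 0) :
    IsSamplePredictable μ (setLabel {z | c < (μ.condKernel z).real S}) := by
  intro ε hε
  obtain ⟨n, hn⟩ := exists_measureReal_relIndepPower_threshold_lt μ hS hc hε
  refine ⟨n, setLabel {u | c < empiricalFreq S u}, ?_⟩
  simpa only [ne_eq, setLabel_eq_setLabel_iff, mem_ofPred_eq] using hn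

theorem measure_prod_of_condKernel_levels_zero_one (hS : MeasurableSet S)
    (h01 : ∀ c, μ.fst {z | (μ.condKernel z).real S = c} = 0 →
      μ.fst {z | c < (μ.condKernel z).real S} = 0 ∨ μ.fst {z | c < (μ.condKernel z).real S} = 1)
    {C : Set Z} (hC : MeasurableSet C) : μ (C ×ˢ S) = μ.fst C * μ.snd S := by
  obtain ⟨k, hconst⟩ : ∃ k : ℝ, (fun z ↦ (μ.condKernel z).real S) =ᵐ[μ.fst] fun _ ↦ k :=
    ⟨_, ae_eq_const_integral_of_levels_zero_one (μ.condKernel.measurable_coe hS).ennreal_toReal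
      (Kernel.IsMarkovKernel.integrable _ _ hS) h01⟩
  have hker : ∀ᵐ z ∂μ.fst, μ.condKernel z S = ENNReal.ofReal k := by
    filter_upwards [hconst] with z hz
    rw [← hz, ofReal_measureReal]
  have hrect {C : Set Z} (hC : MeasurableSet C) : μ (C ×ˢ S) = ENNReal.ofReal k * μ.fst C := by
    rw [← Measure.setLIntegral_condKernel_eq_measure_prod hC hS,
      lintegral_congr_ae (ae_restrict_of_ae hker), setLIntegral_const]
  have hsnd : μ.snd S = ENNReal.ofReal k := by
    rw [Measure.snd_apply hS, ← univ_prod, hrect MeasurableSet.univ, measure_univ, mul_one]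
  rw [hrect hC, hsnd, mul_comm]

end Threshold

/-- Theorem: a measure-preserving system with zero entropy is disjoint from one with
completely positive entropy: any `G`-invariant joining of the two is the product
measure. -/
theorem stmt19 {G Y Z : Type*} [Group G] [MeasurableSpace Y] [MeasurableSpace Z]
    [MulAction G Y] [MulAction G Z]
    (hamen : FolnerAmenable G)
    (ν : Measure Y) [IsProbabilityMeasure ν]
    (hν : ∀ s : G, MeasurePreserving (fun y : Y => s • y) ν ν)
    (ω : Measure Z) [IsProbabilityMeasure ω]
    (hω : ∀ s : G, MeasurePreserving (fun z : Z => s • z) ω ω)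
    (hzero : ∀ (r : ℕ) (P : Fin r → Set Y), IsMeasPartition P →
      invLimsup (fun F : Finset G => HJoin ν P F) = 0)
    (hcpe : ∀ (r : ℕ) (Q : Fin r → Set Z), IsMeasPartition Q →
      invLimsup (fun F : Finset G => HJoin ω Q F) = 0 →
      ∀ a, ω (Q a) = 0 ∨ ω (Q a) = 1)
    (ρ : Measure (Y × Z)) [IsProbabilityMeasure ρ]
    (hρinv : ∀ s : G, MeasurePreserving (fun p : Y × Z => s • p) ρ ρ)
    (hfst : ρ.map Prod.fst = ν) (hsnd : ρ.map Prod.snd = ω) :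
    ρ = ν.prod ω := by
  have : MeasurableConstSMul G Y := ⟨fun s ↦ (hν s).measurable⟩
  have : MeasurableConstSMul G Z := ⟨fun s ↦ (hω s).measurable⟩
  subst hfst hsnd
  refine (Measure.prod_eq fun A C hA hC ↦ ?_).symm
  have hp := measurable_setLabel hA
  have := isProbabilityMeasure_observedLaw ρ hp
  have hsplit := measure_prod_of_condKernel_levels_zero_one (μ := observedLaw (setLabel A) ρ)
    (measurableSet_singleton 1) (fun c hc ↦ ?_) hC
  · rwa [observedLaw_prod ρ hp hC (measurableSet_singleton 1), observedLaw_fst ρ hp,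
      observedLaw_snd ρ hp, Measure.map_apply hp (measurableSet_singleton 1),
      setLabel_preimage_one, mul_comm] at hsplit
  · have hq := measurable_setLabel (measurableSet_lt (measurable_const (a := c))
      ((observedLaw (setLabel A) ρ).condKernel.measurable_coe
        (measurableSet_singleton 1)).ennreal_toReal)
    have hqzero := invLimsup_hJoin_eq_zero_of_isSamplePredictable hρinv hp hq
      (hzero 2 _ (isMeasPartition_fibers hp))
      (isSamplePredictable_setLabel_lt_condKernel (measurableSet_singleton 1) hc)
    rw [observedLaw_fst ρ hp, ← setLabel_preimage_one {z | c < _}]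
    exact hcpe 2 _ (isMeasPartition_fibers hq) hqzero 1
end
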